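/- arXiv:2207.01235 — 4 statements merged into one kernel-verified Lean document; each statement's English description precedes it below -/
import Mathlib

section
/- Let d ≥ 1, let p > 1 with conjugate exponent q satisfying 1/p + 1/q = 1, and let μ, ν be Borel probability measures on ℝ^d with finite p-th moments. Then the infimum, taken over all convex functions f : ℝ^d → ℝ that are integrable with respect to both μ and ν, of (∫ f dν − ∫ f dμ), equals the infimum over all Borel probability measures ρ on ℝ^d with finite q-th moment of (C(ν,ρ) − C(μ,ρ)), where both infima are taken in the extended reals [−∞, ∞]. -/
open MeasureTheory Metric RealInnerProductSpace

noncomputable section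

/-- The set of couplings of two measures on `ℝ^d`. -/
def Couplings {d : ℕ} (α β : Measure (EuclideanSpace ℝ (Fin d))) :
    Set (Measure (EuclideanSpace ℝ (Fin d) × EuclideanSpace ℝ (Fin d))) :=
  {π | π.map Prod.fst = α ∧ π.map Prod.snd = β}

/-- `C(α,β) = sup_{π ∈ Π(α,β)} ∫ ⟨x,y⟩ dπ`. -/
def OTcost {d : ℕ} (α β : Measure (EuclideanSpace ℝ (Fin d))) : ℝ :=
  sSup {r : ℝ | ∃ π ∈ Couplings α β, r = ∫ p, ⟪p.1, p.2⟫ ∂π}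


lemma exists_argmax {X ι : Type*} [MeasurableSpace X] (l : ι → X → ℝ)
    (hl : ∀ i, Measurable (l i)) (S : Finset ι) (hS : S.Nonempty) :
    ∃ s : X → ι, (∀ i, MeasurableSet (s ⁻¹' {i})) ∧
      ∀ x, s x ∈ S ∧ ∀ j ∈ S, l j x ≤ l (s x) x := by
  classical
  induction hS using Finset.Nonempty.cons_induction with
  | singleton a =>
    refine ⟨fun _ => a, fun i => ?_, fun x => by simp⟩
    by_cases h : a = i
    · have : (fun _ : X => a) ⁻¹' {i} = Set.univ := by ext; simp [h]
      rw [this]; exact MeasurableSet.univ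
    · have : (fun _ : X => a) ⁻¹' {i} = ∅ := by ext; simp [h]
      rw [this]; exact MeasurableSet.empty
  | cons a S ha hS ih =>
    obtain ⟨s, hs, hmax⟩ := ih
    have hB : MeasurableSet {x | l (s x) x < l a x} := by
      have : {x | l (s x) x < l a x} = ⋃ j ∈ S, (s ⁻¹' {j} ∩ {x | l j x < l a x}) := by
        ext x
        simp only [Set.mem_ofPred_eq, Set.mem_iUnion, Set.mem_inter_iff, Set.mem_preimage,
          Set.mem_singleton_iff, exists_prop]
        constructor
        · intro h; exact ⟨s x, (hmax x).1, rfl, h⟩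
        · rintro ⟨j, _, rfl, h⟩; exact h
      rw [this]
      exact Finset.measurableSet_biUnion _ fun j _ =>
        (hs j).inter (measurableSet_lt (hl j) (hl a))
    refine ⟨fun x => if l (s x) x < l a x then a else s x, fun i => ?_, fun x => ?_⟩
    · by_cases h : a = i
      · subst h
        have : (fun x => if l (s x) x < l a x then a else s x) ⁻¹' {a} =
            {x | l (s x) x < l a x} ∪ s ⁻¹' {a} := by
          ext x
          simp only [Set.mem_preimage, Set.mem_singleton_iff, Set.mem_union, Set.mem_ofPred_eq]
          split_ifs with h1 <;> simp [h1]
        rw [this]; exact hB.union (hs a)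
      · have : (fun x => if l (s x) x < l a x then a else s x) ⁻¹' {i} =
            {x | l (s x) x < l a x}ᶜ ∩ s ⁻¹' {i} := by
          ext x
          simp only [Set.mem_preimage, Set.mem_singleton_iff, Set.mem_inter_iff, Set.mem_compl_iff,
            Set.mem_ofPred_eq]
          split_ifs with h1 <;> simp [h, h1]
        rw [this]; exact hB.compl.inter (hs i)
    · obtain ⟨h1, h2⟩ := hmax x
      dsimp only
      split_ifs with h
      · refine ⟨by simp, fun j hj => ?_⟩
        rcases Finset.mem_cons.1 hj with rfl | hj
        · exact le_rfl
        · exact (h2 j hj).trans h.le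
      · refine ⟨by simp [h1], fun j hj => ?_⟩
        rcases Finset.mem_cons.1 hj with rfl | hj
        · exact not_lt.1 h
        · exact h2 j hj

section basics
variable {d : ℕ} {p q : ℝ} {α β : Measure (EuclideanSpace ℝ (Fin d))}

lemma memLp_id_of (hp : 0 < p) (h : Integrable (fun x => ‖x‖ ^ p) α) :
    MemLp (fun x => x) (ENNReal.ofReal p) α := by
  have := integrable_norm_rpow_iff (f := fun x : EuclideanSpace ℝ (Fin d) => x) (μ := α)
    (p := ENNReal.ofReal p) (by fun_prop) (by simp [hp]) (by simp)
  rw [ENNReal.toReal_ofReal hp.le] at this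
  exact this.1 h

lemma integrable_id_of (hp : 1 < p) [IsProbabilityMeasure α]
    (h : Integrable (fun x => ‖x‖ ^ p) α) : Integrable (fun x => x) α :=
  (memLp_id_of (by linarith) h).integrable (by simpa using hp.le)

lemma integrable_affine [IsFiniteMeasure α] (h : Integrable (fun x => x) α)
    (y : EuclideanSpace ℝ (Fin d)) (c : ℝ) : Integrable (fun x => ⟪x, y⟫ - c) α :=
  (h.inner_const y).sub (integrable_const c)

lemma coupling_fst {π} (hπ : π ∈ Couplings α β) : MeasurePreserving Prod.fst π α :=
  ⟨measurable_fst, hπ.1⟩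

lemma coupling_snd {π} (hπ : π ∈ Couplings α β) : MeasurePreserving Prod.snd π β :=
  ⟨measurable_snd, hπ.2⟩

lemma coupling_inner_le (hpq : p.HolderConjugate q) {π} (hπ : π ∈ Couplings α β)
    {Z : EuclideanSpace ℝ (Fin d) → EuclideanSpace ℝ (Fin d)}
    (hα : MemLp (fun x => x) (ENNReal.ofReal p) α) (hZ : MemLp Z (ENNReal.ofReal q) β) :
    Integrable (fun z => ⟪z.1, Z z.2⟫) π ∧
    |∫ z, ⟪z.1, Z z.2⟫ ∂π| ≤ (∫ x, ‖x‖ ^ p ∂α) ^ (1 / p) * (∫ y, ‖Z y‖ ^ q ∂β) ^ (1 / q) := by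
  have h1 : MemLp (fun z : EuclideanSpace ℝ (Fin d) × EuclideanSpace ℝ (Fin d) => z.1)
      (ENNReal.ofReal p) π := hα.comp_measurePreserving (coupling_fst hπ)
  have h2 : MemLp (fun z : EuclideanSpace ℝ (Fin d) × EuclideanSpace ℝ (Fin d) => Z z.2)
      (ENNReal.ofReal q) π := hZ.comp_measurePreserving (coupling_snd hπ)
  have hH := integral_mul_norm_le_Lp_mul_Lq hpq h1 h2
  have e1 : ∫ z, ‖z.1‖ ^ p ∂π = ∫ x, ‖x‖ ^ p ∂α := by
    rw [← hπ.1, integral_map measurable_fst.aemeasurable]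
    exact (by fun_prop : Measurable fun x : EuclideanSpace ℝ (Fin d) =>
      ‖x‖ ^ p).aestronglyMeasurable
  have e2 : ∫ z, ‖Z z.2‖ ^ q ∂π = ∫ y, ‖Z y‖ ^ q ∂β := by
    have hm : AEStronglyMeasurable (fun y => ‖Z y‖ ^ q) β :=
      (hZ.1.norm.aemeasurable.pow_const q).aestronglyMeasurable
    rw [← hπ.2] at hm
    rw [← integral_map measurable_snd.aemeasurable hm, hπ.2]
  rw [e1, e2] at hH
  have : ENNReal.HolderTriple (ENNReal.ofReal p) (ENNReal.ofReal q) 1 := hpq.ennrealOfReal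
  have hI : Integrable (fun z => ‖z.1‖ * ‖Z z.2‖) π := h1.norm.integrable_mul h2.norm
  have hb : ∀ z : EuclideanSpace ℝ (Fin d) × EuclideanSpace ℝ (Fin d),
      ‖⟪z.1, Z z.2⟫‖ ≤ ‖z.1‖ * ‖Z z.2‖ := fun z => norm_inner_le_norm _ _
  refine ⟨hI.mono' (h1.1.inner h2.1) (Filter.Eventually.of_forall hb), ?_⟩
  refine le_trans ?_ hH
  exact norm_integral_le_of_norm_le hI (Filter.Eventually.of_forall hb)

lemma le_OTcost (hpq : p.HolderConjugate q) (hα : MemLp (fun x => x) (ENNReal.ofReal p) α)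
    (hβ : MemLp (fun x => x) (ENNReal.ofReal q) β) {π} (hπ : π ∈ Couplings α β) :
    ∫ z, ⟪z.1, z.2⟫ ∂π ≤ OTcost α β := by
  refine le_csSup ⟨(∫ x, ‖x‖ ^ p ∂α) ^ (1 / p) * (∫ y, ‖y‖ ^ q ∂β) ^ (1 / q), ?_⟩ ⟨π, hπ, rfl⟩
  rintro r ⟨π', hπ', rfl⟩
  exact (le_abs_self _).trans (coupling_inner_le hpq hπ' hα hβ).2

lemma OTcost_le [IsProbabilityMeasure α] [IsProbabilityMeasure β] {c : ℝ}
    (h : ∀ π ∈ Couplings α β, ∫ z, ⟪z.1, z.2⟫ ∂π ≤ c) : OTcost α β ≤ c := by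
  refine csSup_le ⟨_, α.prod β, ⟨by simp, by simp⟩, rfl⟩ ?_
  rintro r ⟨π, hπ, rfl⟩
  exact h π hπ

lemma coupling_integral_add {π} (hπ : π ∈ Couplings α β)
    {f g : EuclideanSpace ℝ (Fin d) → ℝ} (hf : Integrable f α) (hg : Integrable g β) :
    Integrable (fun z => f z.1 + g z.2) π ∧
      ∫ z, (f z.1 + g z.2) ∂π = ∫ x, f x ∂α + ∫ y, g y ∂β := by
  have j1 : Integrable (fun z => f z.1) π := (coupling_fst hπ).integrable_comp_of_integrable hf
  have j2 : Integrable (fun z => g z.2) π := (coupling_snd hπ).integrable_comp_of_integrable hg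
  refine ⟨j1.add j2, ?_⟩
  rw [integral_add j1 j2]
  congr 1
  · have := hf.1
    rw [← hπ.1] at this
    rw [← integral_map measurable_fst.aemeasurable this, hπ.1]
  · have := hg.1
    rw [← hπ.2] at this
    rw [← integral_map measurable_snd.aemeasurable this, hπ.2]

end basics

section duality
variable {d : ℕ} {ι : Type*}

lemma maxaffine_convex {y : ι → EuclideanSpace ℝ (Fin d)} {g : ι → ℝ} {S : Finset ι}
    {s : EuclideanSpace ℝ (Fin d) → ι}
    (hs : ∀ x, s x ∈ S ∧ ∀ j ∈ S, ⟪x, y j⟫ - g j ≤ ⟪x, y (s x)⟫ - g (s x)) :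
    ConvexOn ℝ Set.univ (fun x => ⟪x, y (s x)⟫ - g (s x)) := by
  refine ⟨convex_univ, fun x _ z _ a b ha hb hab => ?_⟩
  have h1 := (hs x).2 _ (hs (a • x + b • z)).1
  have h2 := (hs z).2 _ (hs (a • x + b • z)).1
  dsimp only
  generalize s (a • x + b • z) = i at *
  rw [inner_add_left, real_inner_smul_left, real_inner_smul_left]
  have e : g i = a * g i + b * g i := by rw [← add_mul, hab, one_mul]
  simp only [smul_eq_mul]
  nlinarith [mul_le_mul_of_nonneg_left h1 ha, mul_le_mul_of_nonneg_left h2 hb]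

lemma maxaffine_integrable {y : ι → EuclideanSpace ℝ (Fin d)} {g : ι → ℝ} {S : Finset ι}
    {s : EuclideanSpace ℝ (Fin d) → ι}
    (hs : ∀ x, s x ∈ S ∧ ∀ j ∈ S, ⟪x, y j⟫ - g j ≤ ⟪x, y (s x)⟫ - g (s x))
    (α : Measure (EuclideanSpace ℝ (Fin d))) [IsFiniteMeasure α]
    (hα : Integrable (fun x => x) α) :
    Integrable (fun x => ⟪x, y (s x)⟫ - g (s x)) α := by
  have hc : Continuous (fun x => ⟪x, y (s x)⟫ - g (s x)) :=
    continuousOn_univ.1 ((maxaffine_convex hs).continuousOn isOpen_univ)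
  have hI : Integrable (fun x => ∑ j ∈ S, ‖⟪x, y j⟫ - g j‖) α :=
    integrable_finsetSum _ fun j _ => (integrable_affine hα (y j) (g j)).norm
  refine hI.mono' hc.aestronglyMeasurable (Filter.Eventually.of_forall fun x => ?_)
  exact Finset.single_le_sum (f := fun j => ‖⟪x, y j⟫ - g j‖) (fun j _ => norm_nonneg _) (hs x).1

variable [Fintype ι]

lemma semidiscrete (ν : Measure (EuclideanSpace ℝ (Fin d))) [IsProbabilityMeasure ν]
    (hν : Integrable (fun x => x) ν) (y : ι → EuclideanSpace ℝ (Fin d)) (w : ι → ℝ)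
    (hw : ∀ i, 0 < w i) (hsum : ∑ i, w i = 1) (c : ℝ)
    (hc : ∀ κ : ι → Measure (EuclideanSpace ℝ (Fin d)), ∑ i, κ i = ν →
      (∀ i, (κ i).real Set.univ = w i) → ∑ i, ∫ x, ⟪x, y i⟫ ∂(κ i) ≤ c)
    (ε : ℝ) (hε : 0 < ε) :
    ∃ (g : ι → ℝ) (s : EuclideanSpace ℝ (Fin d) → ι),
      (∀ x, s x ∈ (Finset.univ : Finset ι) ∧
        ∀ j ∈ (Finset.univ : Finset ι), ⟪x, y j⟫ - g j ≤ ⟪x, y (s x)⟫ - g (s x)) ∧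
      ∫ x, (⟪x, y (s x)⟫ - g (s x)) ∂ν + ∑ i, w i * g i ≤ c + ε := by
  classical
  have hne : Nonempty ι := by
    by_contra h
    rw [not_nonempty_iff] at h
    simp at hsum
  have hle : ∀ κ : ι → Measure (EuclideanSpace ℝ (Fin d)), ∑ i, κ i = ν → ∀ i, κ i ≤ ν := by
    intro κ hκ i
    rw [← hκ]
    exact Finset.single_le_sum (f := κ) (fun j _ => Measure.zero_le _) (Finset.mem_univ i)
  have hint : ∀ κ : ι → Measure (EuclideanSpace ℝ (Fin d)), ∑ i, κ i = ν → ∀ i j,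
      Integrable (fun x => ⟪x, y j⟫) (κ i) := fun κ hκ i j =>
    (hν.inner_const (y j)).mono_measure (hle κ hκ i)
  let m : ι → ℝ := fun i => ∫ x, ⟪x, y i⟫ ∂ν
  -- the achievable set
  let V : Set ((ι → ℝ) × ℝ) := {v | ∃ κ : ι → Measure (EuclideanSpace ℝ (Fin d)),
    ∑ i, κ i = ν ∧ v = (fun i => (κ i).real Set.univ, ∑ i, ∫ x, ⟪x, y i⟫ ∂(κ i))}
  -- mixtures
  have hmix : ∀ (κ κ' : ι → Measure (EuclideanSpace ℝ (Fin d))) (a b : ℝ), 0 ≤ a → 0 ≤ b →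
      ∑ i, κ i = ν → (∀ i, κ' i ≤ ν) →
      (∀ i, ((ENNReal.ofReal a • κ i + ENNReal.ofReal b • κ' i).real Set.univ =
        a * (κ i).real Set.univ + b * (κ' i).real Set.univ)) ∧
      (∀ i, ∫ x, ⟪x, y i⟫ ∂(ENNReal.ofReal a • κ i + ENNReal.ofReal b • κ' i) =
        a * ∫ x, ⟪x, y i⟫ ∂(κ i) + b * ∫ x, ⟪x, y i⟫ ∂(κ' i)) := by
    intro κ κ' a b ha hb hκ hκ'
    have f1 : ∀ i, IsFiniteMeasure (κ i) := fun i => isFiniteMeasure_of_le ν (hle κ hκ i)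
    have f2 : ∀ i, IsFiniteMeasure (κ' i) := fun i => isFiniteMeasure_of_le ν (hκ' i)
    refine ⟨fun i => ?_, fun i => ?_⟩
    · have g1 : IsFiniteMeasure (ENNReal.ofReal a • κ i) := Measure.smul_finite _ (by simp)
      have g2 : IsFiniteMeasure (ENNReal.ofReal b • κ' i) := Measure.smul_finite _ (by simp)
      rw [measureReal_add_apply, measureReal_ennreal_smul_apply, measureReal_ennreal_smul_apply,
        ENNReal.toReal_ofReal ha, ENNReal.toReal_ofReal hb]
    · rw [integral_add_measure, integral_smul_measure, integral_smul_measure,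
        ENNReal.toReal_ofReal ha, ENNReal.toReal_ofReal hb, smul_eq_mul, smul_eq_mul]
      · exact (hint κ hκ i i).smul_measure (by simp)
      · exact ((hν.inner_const (y i)).mono_measure (hκ' i)).smul_measure (by simp)
  have hVconv : Convex ℝ V := by
    rintro _ ⟨κ, hκ, rfl⟩ _ ⟨κ', hκ', rfl⟩ a b ha hb hab
    obtain ⟨e1, e2⟩ := hmix κ κ' a b ha hb hκ (fun i => hle κ' hκ' i)
    refine ⟨fun i => ENNReal.ofReal a • κ i + ENNReal.ofReal b • κ' i, ?_, ?_⟩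
    · rw [Finset.sum_add_distrib, ← Finset.smul_sum, ← Finset.smul_sum, hκ, hκ', ← add_smul,
        ← ENNReal.ofReal_add ha hb, hab]
      simp
    · refine Prod.ext ?_ ?_
      · funext i
        simp [e1]
      · simp only [e2, Prod.smul_mk, Prod.mk_add_mk, smul_eq_mul, Finset.sum_add_distrib,
          Finset.mul_sum]
  -- constant point
  have hcsum : ∑ i, ENNReal.ofReal (w i) • ν = ν := by
    rw [← Finset.sum_smul, ← ENNReal.ofReal_sum_of_nonneg (fun i _ => (hw i).le), hsum]
    simp
  let t0 : ℝ := ∑ i, w i * m i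
  have hcV : (w, t0) ∈ V := by
    refine ⟨fun i => ENNReal.ofReal (w i) • ν, hcsum, Prod.ext ?_ ?_⟩
    · funext i
      simp [measureReal_ennreal_smul_apply, (hw i).le]
    · simp [t0, m, integral_smul_measure, (hw _).le]
  have ht0 : t0 ≤ c := by
    have := hc (fun i => ENNReal.ofReal (w i) • ν) hcsum
      (fun i => by simp [measureReal_ennreal_smul_apply, (hw i).le])
    simpa [t0, m, integral_smul_measure, (hw _).le] using this
  have hVsum : ∀ κ : ι → Measure (EuclideanSpace ℝ (Fin d)), ∑ i, κ i = ν →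
      ∑ i, (κ i).real Set.univ = 1 := by
    intro κ hκ
    have f1 : ∀ i, IsFiniteMeasure (κ i) := fun i => isFiniteMeasure_of_le ν (hle κ hκ i)
    have : ν Set.univ = 1 := measure_univ
    rw [← hκ, Measure.finsetSum_apply] at this
    simp only [Measure.real]
    rw [← ENNReal.toReal_sum (fun i _ => measure_ne_top _ _), this]
    simp
  have hnot : (w, c + ε) ∉ closure V := by
    intro hcl
    let η : ℝ := ε / (2 * (c + ε - t0))
    have hpos : 0 < c + ε - t0 := by linarith
    have hη0 : 0 < η := by positivity
    have hη1 : η * (c + ε - t0) = ε / 2 := by simp only [η]; field_simp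
    have hη2 : η < 1 := by
      by_contra h
      push Not at h
      nlinarith
    let U : Set ((ι → ℝ) × ℝ) := (⋂ i, {v | (1 - η) * v.1 i < w i}) ∩
      {v | c < (1 - η) * v.2 + ∑ i, (w i - (1 - η) * v.1 i) * m i}
    have hU : IsOpen U := by
      refine IsOpen.inter (isOpen_iInter_of_finite fun i => ?_) ?_
      · exact isOpen_lt (by fun_prop) (by fun_prop)
      · exact isOpen_lt (by fun_prop) (by fun_prop)
    have hmem : (w, c + ε) ∈ U := by
      refine ⟨Set.mem_iInter.2 fun i => ?_, ?_⟩
      · have := mul_pos hη0 (hw i)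
        simp only [Set.mem_ofPred_eq]
        linarith
      · have : ∑ i, (w i - (1 - η) * w i) * m i = η * t0 := by
          simp only [t0, Finset.mul_sum]
          exact Finset.sum_congr rfl fun i _ => by ring
        simp only [Set.mem_ofPred_eq]
        rw [this]
        linarith
    obtain ⟨v, ⟨hv1, hv2⟩, κ, hκ, rfl⟩ := mem_closure_iff.1 hcl U hU hmem
    rw [Set.mem_iInter] at hv1
    simp only [Set.mem_ofPred_eq] at hv1 hv2
    let b : ι → ℝ := fun i => w i - (1 - η) * (κ i).real Set.univ
    have hb : ∀ i, 0 ≤ b i := fun i => by simp only [b]; linarith [hv1 i]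
    have hη3 : 0 ≤ 1 - η := by linarith
    have hbs : ∑ i, b i = η := by
      simp only [b, Finset.sum_sub_distrib, ← Finset.mul_sum, hVsum κ hκ, hsum]
      ring
    have key := fun i => hmix κ (fun _ => ν) (1 - η) (b i) hη3 (hb i) hκ (fun _ => le_rfl)
    have := hc (fun i => ENNReal.ofReal (1 - η) • κ i + ENNReal.ofReal (b i) • ν) ?_ ?_
    · have e : ∑ i, ∫ x, ⟪x, y i⟫ ∂(ENNReal.ofReal (1 - η) • κ i + ENNReal.ofReal (b i) • ν) =
          (1 - η) * ∑ i, ∫ x, ⟪x, y i⟫ ∂(κ i) + ∑ i, b i * m i := by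
        rw [Finset.mul_sum, ← Finset.sum_add_distrib]
        exact Finset.sum_congr rfl fun i _ => (key i).2 i
      rw [e] at this
      linarith
    · rw [Finset.sum_add_distrib, ← Finset.smul_sum, ← Finset.sum_smul, hκ,
        ← ENNReal.ofReal_sum_of_nonneg (fun i _ => hb i), hbs, ← add_smul,
        ← ENNReal.ofReal_add hη3 hη0.le]
      simp
    · intro i
      rw [(key i).1 i]
      simp [b]
  obtain ⟨F, u, hF1, hF2⟩ := geometric_hahn_banach_closed_point hVconv.closure isClosed_closure hnot
  let φ : ι → ℝ := fun i => F (Pi.single i 1, 0)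
  let σ : ℝ := F (0, 1)
  have hF : ∀ v t, F (v, t) = ∑ i, v i * φ i + t * σ := by
    intro v t
    have : ((v, t) : (ι → ℝ) × ℝ) =
        ∑ i, v i • ((Pi.single i 1, 0) : (ι → ℝ) × ℝ) + t • ((0, 1) : (ι → ℝ) × ℝ) := by
      refine Prod.ext ?_ ?_
      · funext j
        simp [Prod.fst_sum, Finset.sum_apply, Pi.single_apply]
      · simp [Prod.snd_sum]
    rw [this, map_add, map_sum]
    simp only [map_smul, smul_eq_mul, φ, σ]
  have hσ : 0 < σ := by
    have h1 := (hF1 _ (subset_closure hcV)).trans hF2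
    rw [hF, hF] at h1
    by_contra h
    push Not at h
    nlinarith
  let g : ι → ℝ := fun i => - φ i / σ
  have hgφ : ∀ i, φ i = - (σ * g i) := fun i => by simp only [g]; field_simp
  obtain ⟨s, hsm, hs⟩ := exists_argmax (fun i (x : EuclideanSpace ℝ (Fin d)) => ⟪x, y i⟫ - g i)
    (fun i => by fun_prop) Finset.univ Finset.univ_nonempty
  refine ⟨g, s, hs, ?_⟩
  have hdisj : Pairwise (Function.onFun Disjoint fun i => s ⁻¹' {i}) := by
    intro i j hij
    exact Disjoint.preimage _ (by simpa using hij)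
  have hun : ⋃ i, s ⁻¹' {i} = Set.univ := by ext; simp
  have hpart : ∑ i, ν.restrict (s ⁻¹' {i}) = ν := by
    rw [← Measure.sum_fintype, ← Measure.restrict_iUnion hdisj hsm, hun, Measure.restrict_univ]
  have h3 := (hF1 _ (subset_closure ⟨_, hpart, rfl⟩)).trans hF2
  rw [hF, hF] at h3
  have h4 : ∫ x, (⟪x, y (s x)⟫ - g (s x)) ∂ν =
      ∑ i, (∫ x in s ⁻¹' {i}, ⟪x, y i⟫ ∂ν - (ν.restrict (s ⁻¹' {i})).real Set.univ * g i) := by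
    conv_lhs => rw [← hpart]
    rw [integral_finsetSum_measure]
    · refine Finset.sum_congr rfl fun i _ => ?_
      rw [← smul_eq_mul, ← integral_const, ← integral_sub (hint _ hpart i i) (integrable_const _)]
      refine setIntegral_congr_fun (hsm i) fun x hx => ?_
      have : s x = i := hx
      simp [this]
    · intro i _
      exact (maxaffine_integrable hs ν hν).restrict
  rw [h4, Finset.sum_sub_distrib]
  simp only [hgφ] at h3
  have e1 : ∀ v : ι → ℝ, ∑ i, v i * -(σ * g i) = - (σ * ∑ i, v i * g i) := by
    intro v
    rw [Finset.mul_sum, ← Finset.sum_neg_distrib]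
    exact Finset.sum_congr rfl fun i _ => by ring
  rw [e1, e1] at h3
  refine le_of_mul_le_mul_left ?_ hσ
  linarith

end duality

section partA
variable {d : ℕ} {p q : ℝ}

lemma exists_quantizer (ρ : Measure (EuclideanSpace ℝ (Fin d))) [IsProbabilityMeasure ρ]
    (hq : 0 < q) (hρ : MemLp (fun x => x) (ENNReal.ofReal q) ρ) (τ : ℝ) (hτ : 0 < τ) :
    ∃ (ι : Type) (_ : Fintype ι) (J : EuclideanSpace ℝ (Fin d) → ι)
      (y : ι → EuclideanSpace ℝ (Fin d)),
      (∀ i, MeasurableSet (J ⁻¹' {i})) ∧ (∀ i, ρ (J ⁻¹' {i}) ≠ 0) ∧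
      MemLp (fun z => z - y (J z)) (ENNReal.ofReal q) ρ ∧
      (∫ z, ‖z - y (J z)‖ ^ q ∂ρ) ^ (1 / q) ≤ τ := by
  classical
  obtain ⟨T, hT1, hT2⟩ := hρ.exists_simpleFunc_eLpNorm_sub_lt (by simp)
    (ε := ENNReal.ofReal τ) (by simp [hτ])
  let S : Finset (EuclideanSpace ℝ (Fin d)) := T.range.filter (fun v => ρ (T ⁻¹' {v}) ≠ 0)
  have hae : ∀ᵐ z ∂ρ, T z ∈ S := by
    have h0 : ∀ v ∈ T.range.filter (fun v => ρ (T ⁻¹' {v}) = 0), ρ (T ⁻¹' {v}) = 0 :=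
      fun v hv => (Finset.mem_filter.1 hv).2
    have h1 : ρ (⋃ v ∈ T.range.filter (fun v => ρ (T ⁻¹' {v}) = 0), T ⁻¹' {v}) = 0 := 
      (measure_biUnion_null_iff (Finset.countable_toSet _)).2 h0
    rw [ae_iff]
    refine measure_mono_null (fun z hz => ?_) h1
    simp only [S, Finset.mem_filter, Set.mem_ofPred_eq, not_and, not_not] at hz
    simp only [Set.mem_iUnion]
    exact ⟨T z, Finset.mem_filter.2 ⟨T.mem_range_self z, hz (T.mem_range_self z)⟩, rfl⟩
  have hne : S.Nonempty := by
    obtain ⟨z, hz⟩ := hae.exists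
    exact ⟨_, hz⟩
  obtain ⟨v0, hv0⟩ := hne
  let N := S.card
  let e : S ≃ Fin N := S.equivFin
  let φ : EuclideanSpace ℝ (Fin d) → Fin N := fun v => if h : v ∈ S then e ⟨v, h⟩ else e ⟨v0, hv0⟩
  have hφ : ∀ v ∈ S, ((e.symm (φ v) : S) : EuclideanSpace ℝ (Fin d)) = v := by
    intro v hv
    simp [φ, hv]
  have hTe : (fun z => z - T z) =ᵐ[ρ]
      (fun z => z - ((e.symm (φ (T z)) : S) : EuclideanSpace ℝ (Fin d))) := by
    filter_upwards [hae] with z hz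
    rw [hφ _ hz]
  have hM : MemLp (fun z => z - T z) (ENNReal.ofReal q) ρ := hρ.sub hT2
  refine ⟨Fin N, inferInstance, fun z => φ (T z), fun i => ((e.symm i : S) : _), ?_, ?_, ?_, ?_⟩
  · intro i
    exact T.measurableSet_preimage (φ ⁻¹' {i})
  · intro i h
    have hi := (e.symm i).2
    refine (Finset.mem_filter.1 hi).2 (measure_mono_null ?_ h)
    intro z hz
    have hz : T z = (e.symm i : S) := hz
    have := hφ (T z) (hz ▸ hi)
    rw [hz] at this
    have h2 := e.symm.injective (Subtype.ext this)
    simp only [Set.mem_preimage, Set.mem_singleton_iff]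
    rw [hz]; exact h2
  · exact hM.ae_eq hTe
  · have h1 := hM.eLpNorm_eq_integral_rpow_norm (by simp [hq]) (by simp)
    rw [ENNReal.toReal_ofReal hq.le] at h1
    have h2 : eLpNorm (fun z => z - T z) (ENNReal.ofReal q) ρ < ENNReal.ofReal τ := hT1
    rw [h1] at h2
    have h3 := ((ENNReal.ofReal_lt_ofReal_iff hτ).1 h2).le
    rw [← one_div] at h3
    refine le_trans (le_of_eq ?_) h3
    congr 1
    refine integral_congr_ae ?_
    filter_upwards [hTe] with z hz
    rw [hz]

lemma glue_coupling {ι : Type} [Fintype ι] (ν ρ : Measure (EuclideanSpace ℝ (Fin d)))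
    [IsProbabilityMeasure ν] [IsProbabilityMeasure ρ]
    (hν : Integrable (fun x => x) ν)
    (J : EuclideanSpace ℝ (Fin d) → ι) (y : ι → EuclideanSpace ℝ (Fin d))
    (hJ : ∀ i, MeasurableSet (J ⁻¹' {i})) (hJ0 : ∀ i, ρ (J ⁻¹' {i}) ≠ 0)
    (κ : ι → Measure (EuclideanSpace ℝ (Fin d))) (hκ : ∑ i, κ i = ν)
    (hκw : ∀ i, (κ i).real Set.univ = ρ.real (J ⁻¹' {i})) :
    ∃ π ∈ Couplings ν ρ, ∫ z, ⟪z.1, y (J z.2)⟫ ∂π = ∑ i, ∫ x, ⟪x, y i⟫ ∂(κ i) := by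
  have hle : ∀ i, κ i ≤ ν := by
    intro i
    rw [← hκ]
    exact Finset.single_le_sum (f := κ) (fun j _ => Measure.zero_le _) (Finset.mem_univ i)
  have f1 : ∀ i, IsFiniteMeasure (κ i) := fun i => isFiniteMeasure_of_le ν (hle i)
  have f2 : ∀ i, IsProbabilityMeasure (ProbabilityTheory.cond ρ (J ⁻¹' {i})) := fun i =>
    ProbabilityTheory.cond_isProbabilityMeasure (hJ0 i)
  have hκw' : ∀ i, κ i Set.univ = ρ (J ⁻¹' {i}) := fun i =>
    (ENNReal.toReal_eq_toReal_iff' (measure_ne_top _ _) (measure_ne_top _ _)).1 (hκw i)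
  have hdisj : Pairwise (Function.onFun Disjoint fun i => J ⁻¹' {i}) := by
    intro i j hij
    exact Disjoint.preimage _ (by simpa using hij)
  have hun : ⋃ i, J ⁻¹' {i} = Set.univ := by ext; simp
  have hpart : ∑ i, ρ.restrict (J ⁻¹' {i}) = ρ := by
    rw [← Measure.sum_fintype, ← Measure.restrict_iUnion hdisj hJ, hun, Measure.restrict_univ]
  refine ⟨∑ i, (κ i).prod (ProbabilityTheory.cond ρ (J ⁻¹' {i})), ⟨?_, ?_⟩, ?_⟩
  · rw [← Measure.mapₗ_apply_of_measurable measurable_fst, map_sum]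
    simp only [Measure.mapₗ_apply_of_measurable measurable_fst, Measure.map_fst_prod, measure_univ,
      one_smul]
    exact hκ
  · rw [← Measure.mapₗ_apply_of_measurable measurable_snd, map_sum]
    simp only [Measure.mapₗ_apply_of_measurable measurable_snd, Measure.map_snd_prod, hκw',
      ProbabilityTheory.cond, smul_smul]
    rw [← hpart]
    refine Finset.sum_congr rfl fun i _ => ?_
    rw [hpart, ENNReal.mul_inv_cancel (hJ0 i) (measure_ne_top _ _), one_smul]
  · have hae : ∀ i, (fun z : EuclideanSpace ℝ (Fin d) × EuclideanSpace ℝ (Fin d) =>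
        ⟪z.1, y i⟫) =ᵐ[(κ i).prod (ProbabilityTheory.cond ρ (J ⁻¹' {i}))]
        (fun z => ⟪z.1, y (J z.2)⟫) := by
      intro i
      have h1 := (Measure.quasiMeasurePreserving_snd (μ := κ i)
        (ν := ProbabilityTheory.cond ρ (J ⁻¹' {i}))).ae (ProbabilityTheory.ae_cond_mem (hJ i))
      filter_upwards [h1] with z hz
      have hz : J z.2 = i := hz
      rw [hz]
    rw [integral_finsetSum_measure]
    · refine Finset.sum_congr rfl fun i _ => ?_
      rw [← integral_congr_ae (hae i), integral_fun_fst (fun x => ⟪x, y i⟫)]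
      simp
    · intro i _
      have : Integrable (fun x => ⟪x, y i⟫) (κ i) := (hν.inner_const (y i)).mono_measure (hle i)
      exact (this.comp_fst _).congr (hae i)

lemma partA (hpq : p.HolderConjugate q) (μ ν ρ : Measure (EuclideanSpace ℝ (Fin d)))
    [IsProbabilityMeasure μ] [IsProbabilityMeasure ν] [IsProbabilityMeasure ρ]
    (hμ : Integrable (fun x => ‖x‖ ^ p) μ) (hν : Integrable (fun y => ‖y‖ ^ p) ν)
    (hρ : Integrable (fun y => ‖y‖ ^ q) ρ) (ε : ℝ) (hε : 0 < ε) :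
    ∃ f : EuclideanSpace ℝ (Fin d) → ℝ,
        ConvexOn ℝ Set.univ f ∧ Integrable f μ ∧ Integrable f ν ∧
        ∫ x, f x ∂ν - ∫ x, f x ∂μ ≤ OTcost ν ρ - OTcost μ ρ + 2 * ε := by
  have hμ' := memLp_id_of hpq.pos hμ
  have hν' := memLp_id_of hpq.pos hν
  have hρ' := memLp_id_of hpq.symm.pos hρ
  have hμ1 := integrable_id_of hpq.lt hμ
  have hν1 := integrable_id_of hpq.lt hν
  set Mμ := (∫ x, ‖x‖ ^ p ∂μ) ^ (1 / p)
  set Mν := (∫ x, ‖x‖ ^ p ∂ν) ^ (1 / p)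
  have hMμ : 0 ≤ Mμ := by positivity
  have hMν : 0 ≤ Mν := by positivity
  obtain ⟨ι, _, J, y, hJ, hJ0, hJM, hJτ⟩ := exists_quantizer ρ hpq.symm.pos hρ'
    (ε / (Mμ + Mν + 1)) (by positivity)
  set τ := (∫ z, ‖z - y (J z)‖ ^ q ∂ρ) ^ (1 / q)
  have hτ : Mμ * τ + Mν * τ ≤ ε := by
    have h0 : 0 ≤ τ := by positivity
    rw [le_div_iff₀ (by positivity)] at hJτ
    nlinarith
  have hsplit : ∀ (α : Measure (EuclideanSpace ℝ (Fin d))),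
      MemLp (fun x => x) (ENNReal.ofReal p) α → ∀ π ∈ Couplings α ρ,
      Integrable (fun z => ⟪z.1, y (J z.2)⟫) π ∧
      |∫ z, ⟪z.1, z.2⟫ ∂π - ∫ z, ⟪z.1, y (J z.2)⟫ ∂π| ≤ (∫ x, ‖x‖ ^ p ∂α) ^ (1 / p) * τ := by
    intro α hα π hπ
    obtain ⟨i1, -⟩ := coupling_inner_le hpq hπ hα hρ'
    obtain ⟨i2, b2⟩ := coupling_inner_le hpq hπ hα hJM
    have e : (fun z : EuclideanSpace ℝ (Fin d) × EuclideanSpace ℝ (Fin d) =>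
        ⟪z.1, y (J z.2)⟫) = fun z => ⟪z.1, z.2⟫ - ⟪z.1, z.2 - y (J z.2)⟫ := by
      funext z
      rw [inner_sub_right]; ring
    refine ⟨e ▸ i1.sub i2, ?_⟩
    rw [e, integral_sub i1 i2, sub_sub_cancel]
    exact b2
  obtain ⟨g, s, hs, hgs⟩ := semidiscrete ν hν1 y (fun i => ρ.real (J ⁻¹' {i}))
    (fun i => ENNReal.toReal_pos (hJ0 i) (measure_ne_top _ _)) (by
      have hdisj : Pairwise (Function.onFun Disjoint fun i => J ⁻¹' {i}) := by
        intro i j hij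
        exact Disjoint.preimage _ (by simpa using hij)
      have hun : ⋃ i, J ⁻¹' {i} = Set.univ := by ext; simp
      have : ρ Set.univ = 1 := measure_univ
      rw [← hun, measure_iUnion hdisj hJ, tsum_fintype] at this
      simp only [Measure.real]
      rw [← ENNReal.toReal_sum (fun i _ => measure_ne_top _ _), this]
      simp) (OTcost ν ρ + Mν * τ) (by
      intro κ hκ hκw
      obtain ⟨π, hπ, e⟩ := glue_coupling ν ρ hν1 J y hJ hJ0 κ hκ hκw
      have h1 := (abs_le.1 (hsplit ν hν' π hπ).2).1
      have h2 := le_OTcost hpq hν' hρ' hπ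
      rw [← e]
      linarith) ε hε
  have iμ := maxaffine_integrable hs μ hμ1
  have iν := maxaffine_integrable hs ν hν1
  refine ⟨_, maxaffine_convex hs, iμ, iν, ?_⟩
  have hC : OTcost μ ρ ≤ ∫ x, (⟪x, y (s x)⟫ - g (s x)) ∂μ + ∑ i, ρ.real (J ⁻¹' {i}) * g i
      + Mμ * τ := by
    refine OTcost_le fun π hπ => ?_
    obtain ⟨i1, b1⟩ := hsplit μ hμ' π hπ
    have h1 := (abs_le.1 b1).2
    have eg : (fun z => g (J z)) = fun z => ∑ i, (J ⁻¹' {i}).indicator (fun _ => g i) z := by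
      classical
      funext z
      simp [Set.indicator_apply]
    have ii : ∀ i, Integrable ((J ⁻¹' {i}).indicator (fun _ => g i)) ρ := fun i =>
      (integrable_const _).indicator (hJ i)
    have ig : Integrable (fun z => g (J z)) ρ := by
      rw [eg]
      exact integrable_finsetSum _ fun i _ => ii i
    have eg2 : ∫ z, g (J z) ∂ρ = ∑ i, ρ.real (J ⁻¹' {i}) * g i := by
      rw [eg, integral_finsetSum _ fun i _ => ii i]
      refine Finset.sum_congr rfl fun i _ => ?_
      rw [integral_indicator_const _ (hJ i), smul_eq_mul]
    obtain ⟨j1, h3⟩ := coupling_integral_add hπ iμ ig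
    have h2 : ∫ z, ⟪z.1, y (J z.2)⟫ ∂π ≤
        ∫ z, ((⟪z.1, y (s z.1)⟫ - g (s z.1)) + g (J z.2)) ∂π := by
      refine integral_mono i1 j1 fun z => ?_
      have := (hs z.1).2 (J z.2) (Finset.mem_univ _)
      dsimp only
      linarith
    rw [h3, eg2] at h2
    linarith
  linarith

end partA

section partB
variable {d : ℕ} {p q : ℝ}

lemma partB_fin {ι : Type*} (hpq : p.HolderConjugate q)
    (μ ν : Measure (EuclideanSpace ℝ (Fin d)))
    [IsProbabilityMeasure μ] [IsProbabilityMeasure ν]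
    (hμ : Integrable (fun x => ‖x‖ ^ p) μ) (hν : Integrable (fun y => ‖y‖ ^ p) ν)
    {y : ι → EuclideanSpace ℝ (Fin d)} {g : ι → ℝ} {S : Finset ι}
    {s : EuclideanSpace ℝ (Fin d) → ι} (hsm : ∀ i, MeasurableSet (s ⁻¹' {i}))
    (hs : ∀ x, s x ∈ S ∧ ∀ j ∈ S, ⟪x, y j⟫ - g j ≤ ⟪x, y (s x)⟫ - g (s x)) :
    ∃ ρ : Measure (EuclideanSpace ℝ (Fin d)), IsProbabilityMeasure ρ ∧
      Integrable (fun z => ‖z‖ ^ q) ρ ∧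
      OTcost ν ρ - OTcost μ ρ ≤ ∫ x, (⟪x, y (s x)⟫ - g (s x)) ∂ν
        - ∫ x, (⟪x, y (s x)⟫ - g (s x)) ∂μ := by
  classical
  have hμ' := memLp_id_of hpq.pos hμ
  have hν' := memLp_id_of hpq.pos hν
  have hμ1 := integrable_id_of hpq.lt hμ
  have hν1 := integrable_id_of hpq.lt hν
  have eY : (fun x => y (s x)) = fun x => ∑ i ∈ S, (s ⁻¹' {i}).indicator (fun _ => y i) x := by
    funext x
    simp [Set.indicator_apply, (hs x).1]
  have eg : (fun x => g (s x)) = fun x => ∑ i ∈ S, (s ⁻¹' {i}).indicator (fun _ => g i) x := by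
    funext x
    simp [Set.indicator_apply, (hs x).1]
  have hY : Measurable (fun x => y (s x)) := by
    rw [eY]
    exact Finset.measurable_sum _ fun i _ => measurable_const.indicator (hsm i)
  have ig : Integrable (fun x => g (s x)) μ := by
    rw [eg]
    exact integrable_finsetSum _ fun i _ => (integrable_const _).indicator (hsm i)
  have iμ := maxaffine_integrable hs μ hμ1
  have iν := maxaffine_integrable hs ν hν1
  let f : EuclideanSpace ℝ (Fin d) → ℝ := fun x => ⟪x, y (s x)⟫ - g (s x)
  let ρ := μ.map (fun x => y (s x))
  have hρp : IsProbabilityMeasure ρ := Measure.isProbabilityMeasure_map hY.aemeasurable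
  have hρq : Integrable (fun z => ‖z‖ ^ q) ρ := by
    have hm : Measurable (fun z : EuclideanSpace ℝ (Fin d) => ‖z‖ ^ q) := by fun_prop
    rw [integrable_map_measure hm.aestronglyMeasurable hY.aemeasurable]
    refine Integrable.of_bound (hm.comp hY).aestronglyMeasurable (∑ i ∈ S, ‖y i‖ ^ q)
      (Filter.Eventually.of_forall fun x => ?_)
    have h0 : 0 ≤ ‖y (s x)‖ ^ q := by positivity
    simp only [Function.comp_apply, Real.norm_eq_abs, abs_of_nonneg h0]
    exact Finset.single_le_sum (f := fun i => ‖y i‖ ^ q) (fun j _ => by positivity) (hs x).1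
  have hρ' := memLp_id_of hpq.symm.pos hρq
  refine ⟨ρ, hρp, hρq, ?_⟩
  -- lower bound on the cost of `μ`
  have hlow : ∫ x, f x ∂μ + ∫ x, g (s x) ∂μ ≤ OTcost μ ρ := by
    have hm : Measurable (fun x => (x, y (s x))) := measurable_id.prodMk hY
    have hπ : μ.map (fun x => (x, y (s x))) ∈ Couplings μ ρ := by
      refine ⟨?_, ?_⟩
      · rw [Measure.map_map measurable_fst hm]
        exact Measure.map_id
      · rw [Measure.map_map measurable_snd hm]
        rfl
    have h1 := le_OTcost hpq hμ' hρ' hπ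
    rw [integral_map hm.aemeasurable (by fun_prop)] at h1
    rw [← integral_add iμ ig]
    simpa [f] using h1
  let c : EuclideanSpace ℝ (Fin d) → ℝ := fun v => ⨆ x, (⟪x, v⟫ - f x)
  have hbd : ∀ i ∈ S, ∀ x, ⟪x, y i⟫ - f x ≤ g i := fun i hi x => by
    have := (hs x).2 i hi
    simp only [f]
    linarith
  have hc1 : ∀ i ∈ S, c (y i) ≤ g i := fun i hi => ciSup_le (hbd i hi)
  have hc2 : ∀ i ∈ S, ∀ x, ⟪x, y i⟫ ≤ f x + c (y i) := fun i hi x => by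
    have : ⟪x, y i⟫ - f x ≤ c (y i) :=
      le_ciSup (f := fun x => ⟪x, y i⟫ - f x) ⟨g i, by rintro _ ⟨x, rfl⟩; exact hbd i hi x⟩ x
    linarith
  let G : EuclideanSpace ℝ (Fin d) → ℝ := fun z =>
    ∑ v ∈ S.image y, ({v} : Set (EuclideanSpace ℝ (Fin d))).indicator (fun _ => c v) z
  have hG : ∀ i ∈ S, G (y i) = c (y i) := by
    intro i hi
    have : y i ∈ S.image y := Finset.mem_image_of_mem _ hi
    simp only [G, Set.indicator_apply, Set.mem_singleton_iff]
    rw [Finset.sum_ite_eq, if_pos this]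
  have iG : Integrable G ρ :=
    integrable_finsetSum _ fun v _ => (integrable_const _).indicator (measurableSet_singleton v)
  have hGle : ∫ z, G z ∂ρ ≤ ∫ x, g (s x) ∂μ := by
    rw [integral_map hY.aemeasurable iG.1]
    refine integral_mono (iG.comp_measurable hY) ig fun x => ?_
    dsimp only
    rw [hG _ (hs x).1]
    exact hc1 _ (hs x).1
  have hsupp : ∀ᵐ z ∂ρ, z ∈ S.image y := by
    refine (ae_map_iff (p := fun z => z ∈ S.image y) hY.aemeasurable
      (S.image y).measurableSet).2 ?_
    exact Filter.Eventually.of_forall fun x => Finset.mem_image_of_mem _ (hs x).1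
  have hup : OTcost ν ρ ≤ ∫ x, f x ∂ν + ∫ z, G z ∂ρ := by
    refine OTcost_le fun π hπ => ?_
    obtain ⟨j, e⟩ := coupling_integral_add hπ iν iG
    rw [← e]
    refine integral_mono_ae (coupling_inner_le hpq hπ hν' hρ').1 j ?_
    filter_upwards [(coupling_snd hπ).quasiMeasurePreserving.ae hsupp] with z hz
    obtain ⟨i, hi, e⟩ := Finset.mem_image.1 hz
    have := hc2 i hi z.1
    rw [← hG i hi, e] at this
    exact this
  change _ ≤ ∫ x, f x ∂ν - ∫ x, f x ∂μ
  linarith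

lemma partB (hpq : p.HolderConjugate q) (μ ν : Measure (EuclideanSpace ℝ (Fin d)))
    [IsProbabilityMeasure μ] [IsProbabilityMeasure ν]
    (hμ : Integrable (fun x => ‖x‖ ^ p) μ) (hν : Integrable (fun y => ‖y‖ ^ p) ν)
    (f : EuclideanSpace ℝ (Fin d) → ℝ) (hf : ConvexOn ℝ Set.univ f)
    (hfμ : Integrable f μ) (hfν : Integrable f ν) (ε : ℝ) (hε : 0 < ε) :
    ∃ ρ : Measure (EuclideanSpace ℝ (Fin d)), IsProbabilityMeasure ρ ∧
      Integrable (fun z => ‖z‖ ^ q) ρ ∧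
      OTcost ν ρ - OTcost μ ρ ≤ ∫ x, f x ∂ν - ∫ x, f x ∂μ + 2 * ε := by
  have hμ1 := integrable_id_of hpq.lt hμ
  have hν1 := integrable_id_of hpq.lt hν
  have hcont : Continuous f := continuousOn_univ.1 (hf.continuousOn isOpen_univ)
  obtain ⟨l, c, hle, hsup⟩ := hf.univ_sSup_of_nat_affine_eq (𝕜 := ℝ) hcont.lowerSemicontinuous
  let y : ℕ → EuclideanSpace ℝ (Fin d) := fun i => (InnerProductSpace.toDual ℝ _).symm (l i)
  let g : ℕ → ℝ := fun i => - c i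
  have hly : ∀ i x, l i x + c i = ⟪x, y i⟫ - g i := by
    intro i x
    simp only [y, g]
    rw [real_inner_comm, InnerProductSpace.toDual_symm_apply]
    ring
  have hle' : ∀ i x, ⟪x, y i⟫ - g i ≤ f x := fun i x => by
    rw [← hly]; simpa using hle i x
  have hsup' : ∀ x, ⨆ i, (⟪x, y i⟫ - g i) = f x := fun x => by
    have := congrFun hsup x
    rw [iSup_apply] at this
    rw [← this]
    exact iSup_congr fun i => by rw [← hly]; simp
  have hsel := fun n : ℕ => exists_argmax
    (fun i (x : EuclideanSpace ℝ (Fin d)) => ⟪x, y i⟫ - g i)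
    (fun i => by fun_prop) (Finset.range (n + 1)) (by simp)
  choose s hsm hs using hsel
  have hlim : ∀ x, Filter.Tendsto (fun n => ⟪x, y (s n x)⟫ - g (s n x)) Filter.atTop
      (nhds (f x)) := by
    intro x
    refine tendsto_order.2 ⟨fun a ha => ?_, fun a ha => ?_⟩
    · rw [← hsup' x] at ha
      obtain ⟨i, hi⟩ := exists_lt_of_lt_ciSup ha
      filter_upwards [Filter.eventually_ge_atTop i] with n hn
      exact hi.trans_le ((hs n x).2 i (Finset.mem_range.2 (by omega)))
    · exact Filter.Eventually.of_forall fun n => (hle' _ _).trans_lt ha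
  have hint : ∀ (α : Measure (EuclideanSpace ℝ (Fin d))) [IsProbabilityMeasure α],
      Integrable (fun x => x) α → Integrable f α →
      Filter.Tendsto (fun n => ∫ x, (⟪x, y (s n x)⟫ - g (s n x)) ∂α) Filter.atTop
        (nhds (∫ x, f x ∂α)) := by
    intro α _ h1 h2
    refine tendsto_integral_of_dominated_convergence (fun x => |f x| + |⟪x, y 0⟫ - g 0|)
      (fun n => (maxaffine_integrable (hs n) α h1).1)
      (h2.abs.add (integrable_affine h1 (y 0) (g 0)).abs)
      (fun n => Filter.Eventually.of_forall fun x => ?_) (Filter.Eventually.of_forall hlim)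
    have a1 := hle' (s n x) x
    have a2 := (hs n x).2 0 (by simp)
    rw [Real.norm_eq_abs, abs_le]
    constructor
    · linarith [neg_abs_le (⟪x, y 0⟫ - g 0), abs_nonneg (f x)]
    · linarith [le_abs_self (f x), abs_nonneg (⟪x, y 0⟫ - g 0)]
  have e1 := (tendsto_order.1 (hint μ hμ1 hfμ)).1 (∫ x, f x ∂μ - ε) (by linarith)
  have e2 := (tendsto_order.1 (hint ν hν1 hfν)).2 (∫ x, f x ∂ν + ε) (by linarith)
  obtain ⟨n, n1, n2⟩ := (e1.and e2).exists
  obtain ⟨ρ, r1, r2, r3⟩ := partB_fin hpq μ ν hμ hν (hsm n) (hs n)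
  exact ⟨ρ, r1, r2, by linarith⟩

end partB

theorem stmt11 (d : ℕ) (hd : 1 ≤ d) (p q : ℝ) (hp : 1 < p) (hpq : 1 / p + 1 / q = 1)
    (μ ν : Measure (EuclideanSpace ℝ (Fin d)))
    [IsProbabilityMeasure μ] [IsProbabilityMeasure ν]
    (hμ : Integrable (fun x => ‖x‖ ^ p) μ) (hν : Integrable (fun y => ‖y‖ ^ p) ν) :
    sInf {r : EReal | ∃ f : EuclideanSpace ℝ (Fin d) → ℝ,
        ConvexOn ℝ Set.univ f ∧ Integrable f μ ∧ Integrable f ν ∧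
        r = ((∫ x, f x ∂ν - ∫ x, f x ∂μ : ℝ) : EReal)}
      = sInf {r : EReal | ∃ ρ : Measure (EuclideanSpace ℝ (Fin d)),
        IsProbabilityMeasure ρ ∧ Integrable (fun z => ‖z‖ ^ q) ρ ∧
        r = ((OTcost ν ρ - OTcost μ ρ : ℝ) : EReal)} := by
  have hq0 : q ≠ 0 := by
    rintro rfl
    simp at hpq
    linarith
  have hpq' : p.HolderConjugate q := by
    rw [Real.holderConjugate_iff]
    exact ⟨hp, by simpa using hpq⟩
  have aux : ∀ (a : ℝ) (t : EReal), (∀ ε : ℝ, 0 < ε → t ≤ ((a + 2 * ε : ℝ) : EReal)) →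
      t ≤ (a : EReal) := by
    intro a t h
    refine EReal.le_of_forall_lt_iff_le.1 fun z hz => ?_
    have hz' : a < z := by exact_mod_cast hz
    have := h ((z - a) / 2) (by linarith)
    convert this using 2
    ring
  apply le_antisymm
  · refine le_sInf ?_
    rintro _ ⟨ρ, h1, h2, rfl⟩
    refine aux _ _ fun ε hε => ?_
    obtain ⟨f, f1, f2, f3, f4⟩ := partA hpq' μ ν ρ hμ hν h2 ε hε
    exact le_trans (sInf_le ⟨f, f1, f2, f3, rfl⟩) (EReal.coe_le_coe_iff.2 f4)
  · refine le_sInf ?_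
    rintro _ ⟨f, f1, f2, f3, rfl⟩
    refine aux _ _ fun ε hε => ?_
    obtain ⟨ρ, r1, r2, r3⟩ := partB hpq' μ ν hμ hν f f1 f2 f3 ε hε
    exact le_trans (sInf_le ⟨ρ, r1, r2, rfl⟩) (EReal.coe_le_coe_iff.2 r3)
end
end

section
/- Let d ≥ 1, let ν, ν′ be Borel probability measures on ℝ^d with finite first moments, and let ρ be a Borel probability measure on ℝ^d whose support is contained in the closed unit ball. Then |C(ν,ρ) − C(ν′,ρ)| ≤ W₁(ν,ν′), where W₁(ν,ν′) := inf over π ∈ Π(ν,ν′) of ∫ |x−z| dπ(x,z) is the 1-Wasserstein distance. -/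
open MeasureTheory Metric RealInnerProductSpace

noncomputable section

/-- The 1-Wasserstein distance `W₁(α,β) = inf_{π ∈ Π(α,β)} ∫ |x-z| dπ`. -/
def W1 {d : ℕ} (α β : Measure (EuclideanSpace ℝ (Fin d))) : ℝ :=
  sInf {r : ℝ | ∃ π ∈ Couplings α β, r = ∫ p, ‖p.1 - p.2‖ ∂π}

open ProbabilityTheory in
lemma gluing_aux {E : Type*} [MeasurableSpace E] [StandardBorelSpace E] [Nonempty E]
    (P π : Measure (E × E)) [IsProbabilityMeasure P] [IsProbabilityMeasure π]
    (h : P.map Prod.fst = π.map Prod.fst) :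
    ∃ γ : Measure (E × (E × E)), γ.map (fun q => (q.1, q.2.1)) = P ∧
      γ.map (fun q => (q.1, q.2.2)) = π := by
  refine ⟨P.fst ⊗ₘ (P.condKernel ×ₖ π.condKernel), ?_, ?_⟩
  · have h1 := Measure.compProd_map (μ := P.fst) (κ := P.condKernel ×ₖ π.condKernel)
      (f := Prod.fst) measurable_fst
    rw [← Kernel.fst_eq, Kernel.fst_prod, Measure.disintegrate] at h1
    exact h1.symm
  · have h1 := Measure.compProd_map (μ := P.fst) (κ := P.condKernel ×ₖ π.condKernel)
      (f := Prod.snd) measurable_snd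
    have h2 : P.fst = π.fst := h
    rw [← Kernel.snd_eq, Kernel.snd_prod, h2, Measure.disintegrate] at h1
    rw [h2]
    exact h1.symm

section aux

variable {d : ℕ}

local notation "E" => EuclideanSpace ℝ (Fin d)

lemma prob_of_map_fst {α : Measure E} [IsProbabilityMeasure α] {π : Measure (E × E)}
    (h : π.map Prod.fst = α) : IsProbabilityMeasure π := by
  constructor
  have : (π.map Prod.fst) Set.univ = 1 := by rw [h]; simp
  rwa [Measure.map_apply measurable_fst MeasurableSet.univ, Set.preimage_univ] at this

lemma coupling_ball {α ρ : Measure E} {π : Measure (E × E)} (h : π ∈ Couplings α ρ)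
    (hρ : ρ (closedBall (0 : E) 1)ᶜ = 0) : ∀ᵐ p ∂π, ‖p.2‖ ≤ 1 := by
  have h1 : ∀ᵐ y ∂(π.map Prod.snd), ‖y‖ ≤ 1 := by
    rw [h.2, ae_iff]
    convert hρ using 2
    ext x
    simp
  exact ae_of_ae_map measurable_snd.aemeasurable h1

lemma coupling_int_fst {α ρ : Measure E} {π : Measure (E × E)} (h : π ∈ Couplings α ρ)
    (hα : Integrable (fun x => ‖x‖) α) : Integrable (fun p => ‖p.1‖) π := by
  rw [← h.1] at hα
  exact hα.comp_measurable measurable_fst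

lemma coupling_int_snd {α ρ : Measure E} {π : Measure (E × E)} (h : π ∈ Couplings α ρ)
    (hα : Integrable (fun x => ‖x‖) ρ) : Integrable (fun p => ‖p.2‖) π := by
  rw [← h.2] at hα
  exact hα.comp_measurable measurable_snd

lemma inner_bound {α ρ : Measure E} {π : Measure (E × E)} (h : π ∈ Couplings α ρ)
    (hρ : ρ (closedBall (0 : E) 1)ᶜ = 0) : ∀ᵐ p ∂π, ‖⟪p.1, p.2⟫‖ ≤ ‖p.1‖ := by
  filter_upwards [coupling_ball h hρ] with p hp
  exact (norm_inner_le_norm p.1 p.2).trans (mul_le_of_le_one_right (norm_nonneg _) hp)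

lemma inner_int {α ρ : Measure E} {π : Measure (E × E)} (h : π ∈ Couplings α ρ)
    (hα : Integrable (fun x => ‖x‖) α)
    (hρ : ρ (closedBall (0 : E) 1)ᶜ = 0) : Integrable (fun p => ⟪p.1, p.2⟫) π :=
  (coupling_int_fst h hα).mono'
    (continuous_fst.inner continuous_snd).aestronglyMeasurable (inner_bound h hρ)

lemma cost_bdd {α ρ : Measure E} (hα : Integrable (fun x => ‖x‖) α)
    (hρ : ρ (closedBall (0 : E) 1)ᶜ = 0) :
    BddAbove {r : ℝ | ∃ π ∈ Couplings α ρ, r = ∫ p, ⟪p.1, p.2⟫ ∂π} := by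
  refine ⟨∫ x, ‖x‖ ∂α, ?_⟩
  rintro r ⟨π, h, rfl⟩
  have h1 : ∫ x, ‖x‖ ∂α = ∫ p, ‖p.1‖ ∂π := by
    rw [← h.1, integral_map measurable_fst.aemeasurable continuous_norm.aestronglyMeasurable]
  rw [h1]
  refine integral_mono_ae (inner_int h hα hρ) (coupling_int_fst h hα) ?_
  filter_upwards [inner_bound h hρ] with p hp
  exact (le_abs_self _).trans hp

lemma coupling_prod (α β : Measure E) [IsProbabilityMeasure α] [IsProbabilityMeasure β] :
    α.prod β ∈ Couplings α β := by
  constructor <;> simp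

lemma one_side {α β ρ : Measure E} [IsProbabilityMeasure α] [IsProbabilityMeasure β]
    [IsProbabilityMeasure ρ]
    (hα : Integrable (fun x => ‖x‖) α) (hβ : Integrable (fun x => ‖x‖) β)
    (hρ : ρ (closedBall (0 : E) 1)ᶜ = 0) {P : Measure (E × E)} (hP : P ∈ Couplings α β) :
    OTcost α ρ ≤ OTcost β ρ + ∫ p, ‖p.1 - p.2‖ ∂P := by
  refine csSup_le ⟨_, _, coupling_prod α ρ, rfl⟩ ?_
  rintro r ⟨π, h, rfl⟩
  have := prob_of_map_fst hP.1
  have := prob_of_map_fst h.1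
  obtain ⟨γ, h1, h2⟩ := gluing_aux P π (hP.1.trans h.1.symm)
  have m1 : Measurable (fun q : E × (E × E) => (q.1, q.2.1)) := by fun_prop
  have m2 : Measurable (fun q : E × (E × E) => (q.1, q.2.2)) := by fun_prop
  have hQ : γ.map Prod.snd ∈ Couplings β ρ := by
    constructor
    · rw [← hP.2, ← h1, Measure.map_map measurable_fst measurable_snd,
        Measure.map_map measurable_snd m1]; rfl
    · rw [← h.2, ← h2, Measure.map_map measurable_snd measurable_snd,
        Measure.map_map measurable_snd m2]; rfl
  have hle : ∫ p, ⟪p.1, p.2⟫ ∂(γ.map Prod.snd) ≤ OTcost β ρ :=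
    le_csSup (cost_bdd hβ hρ) ⟨_, hQ, rfl⟩
  refine le_trans ?_ (add_le_add_left hle _)
  have i1 := inner_int h hα hρ
  have i2 := inner_int hQ hβ hρ
  have i3 : Integrable (fun p : E × E => ‖p.1 - p.2‖) P := by
    refine ((coupling_int_fst hP hα).add (coupling_int_snd hP hβ)).mono'
      (by fun_prop) (ae_of_all _ fun p => ?_)
    simpa using norm_sub_le p.1 p.2
  have hb := ae_of_ae_map measurable_snd.aemeasurable (coupling_ball hQ hρ)
  have ci : Continuous (fun p : E × E => ⟪p.1, p.2⟫) := continuous_fst.inner continuous_snd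
  have cn : Continuous (fun p : E × E => ‖p.1 - p.2‖) := by fun_prop
  rw [← h2] at i1
  rw [← h1] at i3
  rw [← h2, ← h1, integral_map m2.aemeasurable ci.aestronglyMeasurable,
    integral_map measurable_snd.aemeasurable ci.aestronglyMeasurable,
    integral_map m1.aemeasurable cn.aestronglyMeasurable]
  have j1 := i1.comp_measurable m2
  have j2 := i2.comp_measurable measurable_snd
  have j3 := i3.comp_measurable m1
  refine le_trans ?_ (integral_add j2 j3).le
  refine integral_mono_ae j1 (j2.add j3) ?_
  filter_upwards [hb] with q hq
  have : ⟪q.1, q.2.2⟫ = ⟪q.2.1, q.2.2⟫ + ⟪q.1 - q.2.1, q.2.2⟫ := by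
    rw [← inner_add_left]; simp
  have h4 : ⟪q.1 - q.2.1, q.2.2⟫ ≤ ‖q.1 - q.2.1‖ :=
    (real_inner_le_norm _ _).trans (mul_le_of_le_one_right (norm_nonneg _) hq)
  change ⟪q.1, q.2.2⟫ ≤ ⟪q.2.1, q.2.2⟫ + ‖q.1 - q.2.1‖
  linarith

lemma coupling_swap {α β : Measure E} {P : Measure (E × E)} (hP : P ∈ Couplings α β) :
    P.map Prod.swap ∈ Couplings β α := by
  constructor
  · rw [← hP.2, Measure.map_map measurable_fst measurable_swap]; rfl
  · rw [← hP.1, Measure.map_map measurable_snd measurable_swap]; rfl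

end aux

theorem stmt12 (d : ℕ) (hd : 1 ≤ d)
    (ν ν' ρ : Measure (EuclideanSpace ℝ (Fin d)))
    [IsProbabilityMeasure ν] [IsProbabilityMeasure ν'] [IsProbabilityMeasure ρ]
    (hν : Integrable (fun x => ‖x‖) ν) (hν' : Integrable (fun x => ‖x‖) ν')
    (hρ : ρ (closedBall (0 : EuclideanSpace ℝ (Fin d)) 1)ᶜ = 0) :
    |OTcost ν ρ - OTcost ν' ρ| ≤ W1 ν ν' := by
  refine le_csInf ⟨_, _, coupling_prod ν ν', rfl⟩ ?_
  rintro r ⟨P, hP, rfl⟩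
  have h1 := one_side hν hν' hρ hP
  have h2 := one_side hν' hν hρ (coupling_swap hP)
  have cn : Continuous
      (fun p : EuclideanSpace ℝ (Fin d) × EuclideanSpace ℝ (Fin d) => ‖p.1 - p.2‖) := by fun_prop
  rw [integral_map measurable_swap.aemeasurable cn.aestronglyMeasurable] at h2
  have h3 : ∫ p, ‖(Prod.swap p).1 - (Prod.swap p).2‖ ∂P = ∫ p, ‖p.1 - p.2‖ ∂P := by
    congr 1
    ext p
    exact norm_sub_rev _ _
  rw [h3] at h2
  rw [abs_le]
  constructor <;> linarith
end
end

section
/- Let d ≥ 1, let k > 0, and let μ, ν be Borel probability measures on ℝ^d with finite first moments. Then the infimum over all convex k-Lipschitz functions f : ℝ^d → ℝ of (∫ f dν − ∫ f dμ) equals the infimum over all Borel probability measures ρ on ℝ^d with support contained in the closed ball of radius k centered at the origin of (C(ν,ρ) − C(μ,ρ)). -/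
open MeasureTheory Metric RealInnerProductSpace

noncomputable section

theorem lip_integrable {d : ℕ} {k : ℝ} {α : Measure (EuclideanSpace ℝ (Fin d))}
    [IsProbabilityMeasure α] (hα : Integrable (fun x => ‖x‖) α)
    {f : EuclideanSpace ℝ (Fin d) → ℝ} (hk : 0 < k)
    (hf : ∀ x x' : EuclideanSpace ℝ (Fin d), |f x - f x'| ≤ k * ‖x - x'‖) :
    Continuous f ∧ Integrable f α := by
  have hc : Continuous f := by
    have : LipschitzWith ⟨k, hk.le⟩ f := by
      apply LipschitzWith.of_dist_le_mul
      intro x y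
      rw [dist_eq_norm, dist_eq_norm]
      exact hf x y
    exact this.continuous
  refine ⟨hc, Integrable.mono' (g := fun x => |f 0| + k * ‖x‖)
    ((integrable_const _).add (hα.const_mul k)) hc.aestronglyMeasurable ?_⟩
  refine Filter.Eventually.of_forall fun x => ?_
  have h := hf x 0
  rw [sub_zero] at h
  rw [Real.norm_eq_abs]
  have := abs_sub_abs_le_abs_sub (f x) (f 0)
  linarith

theorem ball_ae {d : ℕ} {k : ℝ} {β : Measure (EuclideanSpace ℝ (Fin d))}
    (hβ : β (closedBall (0 : EuclideanSpace ℝ (Fin d)) k)ᶜ = 0) : ∀ᵐ y ∂β, ‖y‖ ≤ k := by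
  have : ∀ᵐ y ∂β, y ∈ closedBall (0 : EuclideanSpace ℝ (Fin d)) k := hβ
  filter_upwards [this] with y hy
  simpa using hy

theorem coupling_facts {d : ℕ} {k : ℝ} {α β : Measure (EuclideanSpace ℝ (Fin d))}
    (hα : Integrable (fun x => ‖x‖) α) (hβ : ∀ᵐ y ∂β, ‖y‖ ≤ k)
    {π : Measure (EuclideanSpace ℝ (Fin d) × EuclideanSpace ℝ (Fin d))}
    (hπ : π ∈ Couplings α β) :
    Integrable (fun p : EuclideanSpace ℝ (Fin d) × EuclideanSpace ℝ (Fin d) => ⟪p.1, p.2⟫) π ∧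
      ∫ p, ⟪p.1, p.2⟫ ∂π ≤ k * ∫ x, ‖x‖ ∂α := by
  obtain ⟨h1, h2⟩ := hπ
  have hb : ∀ᵐ p ∂π, ‖p.2‖ ≤ k := by
    rw [← h2] at hβ
    exact ae_of_ae_map measurable_snd.aemeasurable hβ
  have hi : Integrable (fun p : EuclideanSpace ℝ (Fin d) × EuclideanSpace ℝ (Fin d) => ‖p.1‖) π := by
    rw [← h1] at hα
    exact hα.comp_measurable measurable_fst
  have hle : ∀ᵐ p ∂π, ‖(⟪p.1, p.2⟫ : ℝ)‖ ≤ k * ‖p.1‖ := by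
    filter_upwards [hb] with p hp
    refine (norm_inner_le_norm _ _).trans ?_
    rw [mul_comm]
    gcongr
  have hI : Integrable (fun p : EuclideanSpace ℝ (Fin d) × EuclideanSpace ℝ (Fin d) =>
      (⟪p.1, p.2⟫ : ℝ)) π :=
    Integrable.mono' (hi.const_mul k) (by fun_prop) hle
  refine ⟨hI, ?_⟩
  have e : ∫ x, ‖x‖ ∂α = ∫ p, ‖p.1‖ ∂π := by
    rw [← h1, integral_map measurable_fst.aemeasurable (by fun_prop)]
  rw [e, ← integral_const_mul]
  refine integral_mono_ae hI (hi.const_mul k) ?_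
  filter_upwards [hle] with p hp
  exact (Real.le_norm_self _).trans hp

theorem le_OTcost_s13 {d : ℕ} {k : ℝ} {α β : Measure (EuclideanSpace ℝ (Fin d))}
    (hα : Integrable (fun x => ‖x‖) α) (hβ : ∀ᵐ y ∂β, ‖y‖ ≤ k)
    {π : Measure (EuclideanSpace ℝ (Fin d) × EuclideanSpace ℝ (Fin d))}
    (hπ : π ∈ Couplings α β) : ∫ p, ⟪p.1, p.2⟫ ∂π ≤ OTcost α β := by
  refine le_csSup ⟨k * ∫ x, ‖x‖ ∂α, ?_⟩ ⟨π, hπ, rfl⟩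
  rintro r ⟨π', h', rfl⟩
  exact (coupling_facts hα hβ h').2

theorem OTcost_le_s13 {d : ℕ} {k : ℝ} {α β : Measure (EuclideanSpace ℝ (Fin d))}
    [IsProbabilityMeasure α] [IsProbabilityMeasure β]
    (hα : Integrable (fun x => ‖x‖) α) (hβ : ∀ᵐ y ∂β, ‖y‖ ≤ k)
    {f g : EuclideanSpace ℝ (Fin d) → ℝ} (hf : Integrable f α) (hg : Integrable g β)
    (h : ∀ᵐ y ∂β, ∀ x, ⟪x, y⟫ ≤ f x + g y) :
    OTcost α β ≤ ∫ x, f x ∂α + ∫ y, g y ∂β := by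
  refine csSup_le ⟨_, α.prod β, ⟨by simp, by simp⟩, rfl⟩ ?_
  rintro r ⟨π, hπ, rfl⟩
  have hI := (coupling_facts hα hβ hπ).1
  obtain ⟨h1, h2⟩ := hπ
  have hf' : Integrable (fun p : EuclideanSpace ℝ (Fin d) × EuclideanSpace ℝ (Fin d) => f p.1) π := by
    rw [← h1] at hf
    exact hf.comp_measurable measurable_fst
  have hg' : Integrable (fun p : EuclideanSpace ℝ (Fin d) × EuclideanSpace ℝ (Fin d) => g p.2) π := by
    rw [← h2] at hg
    exact hg.comp_measurable measurable_snd
  have ef : ∫ x, f x ∂α = ∫ p, f p.1 ∂π := by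
    rw [← h1] at hf ⊢
    rw [integral_map measurable_fst.aemeasurable hf.1]
  have eg : ∫ x, g x ∂β = ∫ p, g p.2 ∂π := by
    rw [← h2] at hg ⊢
    rw [integral_map measurable_snd.aemeasurable hg.1]
  rw [ef, eg, ← integral_add hf' hg']
  refine integral_mono_ae hI (hf'.add hg') ?_
  rw [← h2] at h
  filter_upwards [ae_of_ae_map measurable_snd.aemeasurable h] with p hp
  exact hp p.1

/-- An affine minorant of a Lipschitz function, almost touching at a given point. -/
theorem exists_minorant {d : ℕ} {k : ℝ} (hk : 0 < k)
    {f : EuclideanSpace ℝ (Fin d) → ℝ} (hcv : ConvexOn ℝ Set.univ f) (hc : Continuous f)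
    (hf : ∀ x x' : EuclideanSpace ℝ (Fin d), |f x - f x'| ≤ k * ‖x - x'‖)
    {ε : ℝ} (hε : 0 < ε) (x : EuclideanSpace ℝ (Fin d)) :
    ∃ (y : EuclideanSpace ℝ (Fin d)) (c : ℝ), ‖y‖ ≤ k ∧ (∀ z, ⟪z, y⟫ + c ≤ f z) ∧
      ⟪x, y⟫ + c = f x - ε := by
  obtain ⟨l, c, h1, h2⟩ := hcv.exists_affine_le_of_lt (𝕜 := ℝ) (Set.mem_univ x)
    (show f x - ε < f x by linarith) isClosed_univ (hc.lowerSemicontinuous.lowerSemicontinuousOn _)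
  have hl : ∀ z, l z = ⟪z, (InnerProductSpace.toDual ℝ _).symm l⟫ := by
    intro z
    rw [real_inner_comm, InnerProductSpace.toDual_symm_apply]
  set y := (InnerProductSpace.toDual ℝ _).symm l with hy
  have h1' : ∀ z, ⟪z, y⟫ + c ≤ f z := by
    intro z
    have := h1 ⟨z, Set.mem_univ z⟩
    rw [← hl]
    simpa using this
  refine ⟨y, c, ?_, h1', ?_⟩
  · by_contra! hlt
    have hypos : 0 < ‖y‖ := hk.trans hlt
    have hpos : 0 < ‖y‖ * (‖y‖ - k) := mul_pos hypos (by linarith)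
    obtain ⟨n, hn⟩ := exists_nat_gt ((f 0 - c) / (‖y‖ * (‖y‖ - k)))
    rw [div_lt_iff₀ hpos] at hn
    have a1 := h1' ((n : ℝ) • y)
    have a2 := (le_abs_self _).trans (hf ((n : ℝ) • y) 0)
    rw [real_inner_smul_left, real_inner_self_eq_norm_sq] at a1
    rw [sub_zero, norm_smul, Real.norm_natCast] at a2
    nlinarith
  · rw [← hl]
    simpa using h2

theorem part_one {d : ℕ} {k : ℝ} (hk : 0 < k)
    {μ ν : Measure (EuclideanSpace ℝ (Fin d))}
    [IsProbabilityMeasure μ] [IsProbabilityMeasure ν]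
    (hμ : Integrable (fun x => ‖x‖) μ) (hν : Integrable (fun y => ‖y‖) ν)
    {f : EuclideanSpace ℝ (Fin d) → ℝ} (hcv : ConvexOn ℝ Set.univ f)
    (hf : ∀ x x' : EuclideanSpace ℝ (Fin d), |f x - f x'| ≤ k * ‖x - x'‖)
    {ε : ℝ} (hε : 0 < ε) :
    ∃ ρ : Measure (EuclideanSpace ℝ (Fin d)),
        IsProbabilityMeasure ρ ∧ ρ (closedBall (0 : EuclideanSpace ℝ (Fin d)) k)ᶜ = 0 ∧
        OTcost ν ρ - OTcost μ ρ ≤ ∫ x, f x ∂ν - ∫ x, f x ∂μ + (2 * k + 1) * ε := by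
  obtain ⟨hc, hfμ⟩ := lip_integrable hμ hk hf
  obtain ⟨-, hfν⟩ := lip_integrable hν hk hf
  choose Y c hYk hYle hYeq using exists_minorant hk hcv hc hf hε
  let u := TopologicalSpace.denseSeq (EuclideanSpace ℝ (Fin d))
  have hu : ∀ x, ∃ n, dist x (u n) < ε := by
    intro x
    obtain ⟨n, hn⟩ := (TopologicalSpace.denseRange_denseSeq
      (EuclideanSpace ℝ (Fin d))).exists_dist_lt x hε
    exact ⟨n, hn⟩
  classical
  let N : EuclideanSpace ℝ (Fin d) → ℕ := fun x => Nat.find (hu x)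
  have hN : Measurable N := by
    apply measurable_find
    intro n
    exact measurableSet_lt (by fun_prop) (by fun_prop)
  have hNs : ∀ x, dist x (u (N x)) < ε := fun x => Nat.find_spec (hu x)
  let T : EuclideanSpace ℝ (Fin d) → EuclideanSpace ℝ (Fin d) := fun x => Y (u (N x))
  have hT : Measurable T := (measurable_from_nat (f := fun n => Y (u n))).comp hN
  have hTk : ∀ x, ‖T x‖ ≤ k := fun x => hYk _
  let D : Set (EuclideanSpace ℝ (Fin d)) := Set.range fun n => Y (u n)
  have hD : D.Countable := Set.countable_range _
  have hTD : ∀ x, T x ∈ D := fun x => ⟨N x, rfl⟩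
  let fs : EuclideanSpace ℝ (Fin d) → ℝ := fun y => sSup (Set.range fun x => ⟪x, y⟫ - f x)
  have hbd : ∀ n, ∀ r ∈ Set.range (fun x => ⟪x, Y (u n)⟫ - f x), r ≤ - c (u n) := by
    rintro n r ⟨x, rfl⟩
    have := hYle (u n) x
    simp only
    linarith
  have hfs1 : ∀ y ∈ D, ∀ x, ⟪x, y⟫ ≤ f x + fs y := by
    rintro y ⟨n, rfl⟩ x
    have := le_csSup ⟨_, hbd n⟩ (Set.mem_range_self x)
    simp only [fs]
    linarith
  have hfs2 : ∀ x, f x + fs (T x) - (2 * k + 1) * ε ≤ ⟪x, T x⟫ := by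
    intro x
    have a1 : fs (T x) ≤ - c (u (N x)) := csSup_le (Set.range_nonempty _) (hbd (N x))
    have a2 := hYeq (u (N x))
    have a3 := (le_abs_self _).trans (hf x (u (N x)))
    have a4 := hNs x
    rw [dist_eq_norm] at a4
    have a5 : ⟪u (N x) - x, T x⟫ ≤ k * ε := by
      refine (real_inner_le_norm _ _).trans ?_
      rw [norm_sub_rev, mul_comm]
      exact mul_le_mul (hTk x) a4.le (norm_nonneg _) hk.le
    rw [inner_sub_left] at a5
    have a6 : k * ‖x - u (N x)‖ ≤ k * ε := by gcongr
    change ⟪u (N x), T x⟫ + _ = _ at a2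
    linarith
  let g : EuclideanSpace ℝ (Fin d) → ℝ := D.indicator fs
  have hg : Measurable g := by
    refine (measurable_const (a := (0 : ℝ))).measurable_of_countable_ne (hD.mono ?_)
    intro x hx
    by_contra hx'
    exact hx (by simp [g, hx'])
  have hgD : ∀ y ∈ D, g y = fs y := fun y hy => Set.indicator_of_mem hy _
  have hgT : Integrable (fun x => g (T x)) μ := by
    refine Integrable.mono' (g := fun x => |f 0| + (k * ‖x‖ + |f x| + (2 * k + 1) * ε))
      ((integrable_const _).add (((hμ.const_mul k).add hfμ.abs).add (integrable_const _)))
      (hg.comp hT).aestronglyMeasurable (Filter.Eventually.of_forall fun x => ?_)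
    rw [hgD _ (hTD x), Real.norm_eq_abs]
    have b1 := hfs1 _ (hTD x) 0
    have b2 := hfs2 x
    have b3 : ⟪x, T x⟫ ≤ k * ‖x‖ := by
      refine (real_inner_le_norm _ _).trans ?_
      rw [mul_comm]
      gcongr
      exact hTk x
    rw [inner_zero_left] at b1
    have b4 := neg_abs_le (f x)
    have b5 := le_abs_self (f 0)
    have b6 : 0 ≤ (2 * k + 1) * ε := by positivity
    have b7 : 0 ≤ k * ‖x‖ := by positivity
    have b8 := abs_nonneg (f 0)
    have b9 := abs_nonneg (f x)
    rw [abs_le]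
    constructor <;> linarith
  have hρp : IsProbabilityMeasure (μ.map T) := Measure.isProbabilityMeasure_map hT.aemeasurable
  have hρk : (μ.map T) (closedBall (0 : EuclideanSpace ℝ (Fin d)) k)ᶜ = 0 := by
    rw [Measure.map_apply hT isClosed_closedBall.measurableSet.compl]
    convert measure_empty (μ := μ)
    ext x
    simpa using hTk x
  refine ⟨μ.map T, hρp, hρk, ?_⟩
  have hρ := ball_ae hρk
  have eg : ∫ y, g y ∂(μ.map T) = ∫ x, g (T x) ∂μ :=
    integral_map hT.aemeasurable hg.aestronglyMeasurable
  have up : OTcost ν (μ.map T) ≤ ∫ x, f x ∂ν + ∫ x, g (T x) ∂μ := by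
    rw [← eg]
    refine OTcost_le_s13 hν hρ hfν ?_ ?_
    · exact (integrable_map_measure hg.aestronglyMeasurable hT.aemeasurable).2 hgT
    · have : ∀ᵐ y ∂(μ.map T), y ∈ D := by
        refine (ae_map_iff (p := fun y => y ∈ D) hT.aemeasurable hD.measurableSet).2 ?_
        exact Filter.Eventually.of_forall hTD
      filter_upwards [this] with y hy x
      rw [hgD y hy]
      exact hfs1 y hy x
  have hπ : μ.map (fun x => (x, T x)) ∈ Couplings μ (μ.map T) := by
    constructor
    · rw [Measure.map_map measurable_fst (by fun_prop)]
      exact Measure.map_id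
    · rw [Measure.map_map measurable_snd (by fun_prop)]
      rfl
  have lo := le_OTcost_s13 hμ hρ hπ
  have hI := (coupling_facts hμ hρ hπ).1
  have hmT : Measurable fun x => (x, T x) := by fun_prop
  rw [integral_map hmT.aemeasurable hI.1] at lo
  have hI' := hI.comp_measurable hmT
  have lo2 : ∫ x, (f x + g (T x) - (2 * k + 1) * ε) ∂μ ≤ ∫ x, ⟪x, T x⟫ ∂μ := by
    refine integral_mono ((hfμ.add hgT).sub (integrable_const _)) hI' ?_
    intro x
    simp only
    rw [hgD _ (hTD x)]
    exact hfs2 x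
  have hadd : Integrable (fun x => f x + g (T x)) μ := hfμ.add hgT
  rw [integral_sub hadd (integrable_const _), integral_add hfμ hgT, integral_const] at lo2
  simp only [probReal_univ, one_smul] at lo2
  simp only at lo
  linarith

theorem sublinear_exists {V : Type*} [AddCommGroup V] [Module ℝ V] (N : V → ℝ)
    (N_hom : ∀ c : ℝ, 0 < c → ∀ x, N (c • x) = c * N x) (N_add : ∀ x y, N (x + y) ≤ N x + N y)
    (v : V) : ∃ L : V →ₗ[ℝ] ℝ, L v = N v ∧ ∀ x, L x ≤ N x := by
  have N_0 : N 0 = 0 := by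
    have := N_hom 2 (by norm_num) 0
    rw [smul_zero] at this
    linarith
  have H : ∀ t : ℝ, t • v = 0 → (RingHom.id ℝ) t • N v = 0 := by
    intro t ht
    rcases smul_eq_zero.1 ht with h | h
    · simp [h]
    · simp [h, N_0]
  obtain ⟨L, h1, h2⟩ := exists_extension_of_le_sublinear
    (LinearPMap.mkSpanSingleton' (σ := RingHom.id ℝ) v (N v) H) N N_hom N_add (by
      rintro ⟨x, hx⟩
      obtain ⟨t, rfl⟩ := Submodule.mem_span_singleton.1 hx
      rw [LinearPMap.mkSpanSingleton'_apply]
      simp only [RingHom.id_apply, smul_eq_mul]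
      rcases lt_trichotomy t 0 with h | h | h
      · have a1 := N_hom (-t) (by linarith) (-v)
        have a2 := N_add v (-v)
        rw [neg_smul_neg] at a1
        rw [add_neg_cancel, N_0] at a2
        rw [a1]
        nlinarith
      · simp [h, N_0]
      · rw [N_hom t h])
  refine ⟨L, ?_, h2⟩
  have := h1 ⟨v, Submodule.mem_span_singleton_self v⟩
  exact this.trans (LinearPMap.mkSpanSingleton'_apply_self v (N v) H _)

/-- Functions of linear growth in the first variable. -/
def GS (E K : Type*) [NormedAddCommGroup E] : Submodule ℝ (E × K → ℝ) where
  carrier := {h | ∃ A : ℝ, ∀ p, |h p| ≤ A * (1 + ‖p.1‖)}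
  add_mem' := by
    rintro h h' ⟨A, hA⟩ ⟨B, hB⟩
    refine ⟨A + B, fun p => ?_⟩
    rw [add_mul]
    exact (abs_add_le _ _).trans (add_le_add (hA p) (hB p))
  zero_mem' := ⟨0, by simp⟩
  smul_mem' := by
    rintro c h ⟨A, hA⟩
    refine ⟨|c| * A, fun p => ?_⟩
    simp only [Pi.smul_apply, smul_eq_mul, abs_mul, mul_assoc]
    exact mul_le_mul_of_nonneg_left (hA p) (abs_nonneg c)

/-- Values of dual competitors. -/
def DualSet {E K : Type*} [MeasurableSpace E] [MeasurableSpace K]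
    (ν : Measure E) (σ : Measure K) (h : E × K → ℝ) : Set ℝ :=
  {r | ∃ (f : E → ℝ) (g : K → ℝ), Integrable f ν ∧ Integrable g σ ∧
    (∀ x y, h (x, y) ≤ f x + g y) ∧ r = ∫ x, f x ∂ν + ∫ y, g y ∂σ}

section dual
variable {E K : Type*} [NormedAddCommGroup E] [MeasurableSpace E] [MeasurableSpace K]
    {ν : Measure E} {σ : Measure K} [IsProbabilityMeasure ν] [IsProbabilityMeasure σ]

theorem DualSet_nonempty (hν : Integrable (fun x => ‖x‖) ν) (h : GS E K) :
    (DualSet ν σ h.1).Nonempty := by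
  obtain ⟨A, hA⟩ := h.2
  refine ⟨_, fun x => A * (1 + ‖x‖), fun _ => 0, ((integrable_const _).add hν).const_mul A,
    integrable_const _, fun x y => ?_, rfl⟩
  rw [add_zero]
  exact (le_abs_self _).trans (hA (x, y))

theorem DualSet_bddBelow (hν : Integrable (fun x => ‖x‖) ν) (h : GS E K) :
    BddBelow (DualSet ν σ h.1) := by
  obtain ⟨A, hA⟩ := h.2
  refine ⟨∫ x, -(A * (1 + ‖x‖)) ∂ν, ?_⟩
  rintro r ⟨f, g, hf, hg, hfg, rfl⟩
  have hw : Integrable (fun x => -(A * (1 + ‖x‖))) ν :=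
    (((integrable_const _).add hν).const_mul A).neg
  have h1 : ∀ x, -(A * (1 + ‖x‖)) ≤ f x + ∫ y, g y ∂σ := by
    intro x
    have : ∫ _ : K, (-(A * (1 + ‖x‖)) - f x) ∂σ ≤ ∫ y, g y ∂σ := by
      refine integral_mono (integrable_const _) hg fun y => ?_
      have a := hfg x y
      have b := (abs_le.1 (hA (x, y))).1
      simp only at b ⊢
      linarith
    rw [integral_const] at this
    simp only [probReal_univ, one_smul] at this
    linarith
  have h2 := integral_mono hw (hf.add (integrable_const (∫ y, g y ∂σ))) h1
  refine h2.trans (le_of_eq ?_)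
  simp only [Pi.add_apply]
  rw [integral_add hf (integrable_const _), integral_const]
  simp

theorem dual_le (hν : Integrable (fun x => ‖x‖) ν) (h : GS E K) {f : E → ℝ} {g : K → ℝ}
    (hf : Integrable f ν) (hg : Integrable g σ) (hfg : ∀ x y, h.1 (x, y) ≤ f x + g y) :
    sInf (DualSet ν σ h.1) ≤ ∫ x, f x ∂ν + ∫ y, g y ∂σ :=
  csInf_le (DualSet_bddBelow hν h) ⟨f, g, hf, hg, hfg, rfl⟩

theorem exists_functional (hν : Integrable (fun x => ‖x‖) ν) (c : GS E K) :
    ∃ L : GS E K →ₗ[ℝ] ℝ, L c = sInf (DualSet ν σ c.1) ∧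
      ∀ h : GS E K, L h ≤ sInf (DualSet ν σ h.1) := by
  have le_hom : ∀ t : ℝ, 0 < t → ∀ h : GS E K,
      sInf (DualSet ν σ (t • h).1) ≤ t * sInf (DualSet ν σ h.1) := by
    intro t ht h
    rw [← div_le_iff₀' ht]
    refine le_csInf (DualSet_nonempty hν h) ?_
    rintro r ⟨f, g, hf, hg, hfg, rfl⟩
    rw [div_le_iff₀' ht]
    refine (dual_le hν (t • h) (hf.const_mul t) (hg.const_mul t) ?_).trans (le_of_eq ?_)
    · intro x y
      rw [← mul_add]
      exact mul_le_mul_of_nonneg_left (hfg x y) ht.le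
    · rw [integral_const_mul, integral_const_mul, mul_add]
  refine sublinear_exists (fun h : GS E K => sInf (DualSet ν σ h.1)) ?_ ?_ c
  · intro t ht h
    refine le_antisymm (le_hom t ht h) ?_
    have := le_hom t⁻¹ (inv_pos.2 ht) (t • h)
    rw [smul_smul, inv_mul_cancel₀ ht.ne', one_smul, inv_mul_eq_div, le_div_iff₀' ht] at this
    exact this
  · intro h h'
    rw [← sub_le_iff_le_add]
    refine le_csInf (DualSet_nonempty hν h) ?_
    rintro r ⟨f, g, hf, hg, hfg, rfl⟩
    rw [sub_le_comm]
    refine le_csInf (DualSet_nonempty hν h') ?_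
    rintro r ⟨f', g', hf', hg', hfg', rfl⟩
    have := dual_le hν (h + h') (hf.add hf') (hg.add hg') (fun x y => by
      have a := hfg x y
      have b := hfg' x y
      simp only [Submodule.coe_add, Pi.add_apply]
      linarith)
    simp only [Pi.add_apply] at this
    rw [integral_add hf hf', integral_add hg hg'] at this
    linarith

end dual

/-- Cutoff functions. -/
def cutoff {E : Type*} [NormedAddCommGroup E] (n : ℕ) (x : E) : ℝ :=
  max 0 (1 - ‖x‖ / (n + 1))

theorem cutoff_nonneg {E : Type*} [NormedAddCommGroup E] (n : ℕ) (x : E) : 0 ≤ cutoff n x :=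
  le_max_left _ _

theorem cutoff_le_one {E : Type*} [NormedAddCommGroup E] (n : ℕ) (x : E) : cutoff n x ≤ 1 := by
  refine max_le zero_le_one ?_
  have : 0 ≤ ‖x‖ / ((n : ℝ) + 1) := by positivity
  linarith

theorem cutoff_continuous {E : Type*} [NormedAddCommGroup E] (n : ℕ) :
    Continuous (cutoff n : E → ℝ) := by
  unfold cutoff
  fun_prop

theorem cutoff_tendsto {E : Type*} [NormedAddCommGroup E] (x : E) :
    Filter.Tendsto (fun n => cutoff n x) Filter.atTop (nhds 1) := by
  have h : Filter.Tendsto (fun n : ℕ => ‖x‖ / ((n : ℝ) + 1)) Filter.atTop (nhds 0) := by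
    have := (tendsto_one_div_add_atTop_nhds_zero_nat (𝕜 := ℝ)).const_mul ‖x‖
    simpa [div_eq_mul_inv] using this
  have := (tendsto_const_nhds (x := (0 : ℝ))).max ((tendsto_const_nhds (x := (1 : ℝ))).sub h)
  simpa [cutoff] using this

open CompactlySupported in
theorem exists_measure {E K : Type*} [NormedAddCommGroup E] [ProperSpace E]
    [MeasurableSpace E] [BorelSpace E] [SecondCountableTopology E]
    [MetricSpace K] [CompactSpace K] [MeasurableSpace K] [BorelSpace K]
    {ν : Measure E} {σ : Measure K} [IsProbabilityMeasure ν] [IsProbabilityMeasure σ]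
    (hν : Integrable (fun x => ‖x‖) ν) (L : GS E K →ₗ[ℝ] ℝ)
    (hL : ∀ h : GS E K, L h ≤ sInf (DualSet ν σ h.1)) :
    ∃ π : Measure (E × K), IsFiniteMeasure π ∧
      ∀ h : GS E K, Continuous h.1 → ∫ p, h.1 p ∂π = L h := by
  have hmem : ∀ φ : C_c(E × K, ℝ), ⇑φ ∈ GS E K := by
    intro φ
    obtain ⟨C, hC⟩ := φ.hasCompactSupport.exists_bound_of_continuous φ.continuous
    refine ⟨C, fun p => (hC p).trans ?_⟩
    have h0 : 0 ≤ C := (norm_nonneg _).trans (hC p)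
    nlinarith [norm_nonneg p.1]
  have hLle : ∀ (h : GS E K) (f : E → ℝ), Integrable f ν → (∀ x y, h.1 (x, y) ≤ f x) →
      L h ≤ ∫ x, f x ∂ν := by
    intro h f hf hh
    have := (hL h).trans (dual_le hν h hf (integrable_const (0 : ℝ)) (by simpa using hh))
    simpa using this
  have hpos : ∀ h : GS E K, (∀ p, 0 ≤ h.1 p) → 0 ≤ L h := by
    intro h hh
    have := hLle (-h) (fun _ => 0) (integrable_const _) (by
      intro x y
      simpa using hh (x, y))
    simpa using this
  let Λ₀ : C_c(E × K, ℝ) →ₗ[ℝ] ℝ :=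
    { toFun := fun φ => L ⟨φ, hmem φ⟩
      map_add' := fun φ ψ => by
        rw [← map_add]
        rfl
      map_smul' := fun t φ => by
        rw [← map_smul]
        rfl }
  let Λ : C_c(E × K, ℝ) →ₚ[ℝ] ℝ := PositiveLinearMap.mk₀ Λ₀ (fun φ hφ => hpos _ hφ)
  let π := RealRMK.rieszMeasure Λ
  have hπ : ∀ φ : C_c(E × K, ℝ), ∫ p, φ p ∂π = L ⟨φ, hmem φ⟩ := fun φ =>
    RealRMK.integral_rieszMeasure Λ φ
  have hw : Integrable (fun x : E => 1 + ‖x‖) ν := (integrable_const _).add hν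
  -- the truncated function
  have htr : ∀ (n : ℕ) (h : GS E K), Continuous h.1 →
      HasCompactSupport (fun p : E × K => cutoff n p.1 * h.1 p) := by
    intro n h hc
    refine HasCompactSupport.intro (K := closedBall (0 : E) (n + 1) ×ˢ Set.univ)
      ((isCompact_closedBall _ _).prod isCompact_univ) ?_
    intro p hp
    have hp' : (n : ℝ) + 1 < ‖p.1‖ := by
      simpa using hp
    have : cutoff n p.1 = 0 := by
      refine max_eq_left ?_
      rw [sub_nonpos, one_le_div (by positivity)]
      exact hp'.le
    rw [this, zero_mul]
  have hmt : ∀ (n : ℕ) (h : GS E K), (fun p : E × K => cutoff n p.1 * h.1 p) ∈ GS E K := by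
    intro n h
    obtain ⟨A, hA⟩ := h.2
    refine ⟨A, fun p => le_trans ?_ (hA p)⟩
    rw [abs_mul, abs_of_nonneg (cutoff_nonneg _ _)]
    exact mul_le_of_le_one_left (abs_nonneg _) (cutoff_le_one _ _)
  have hπt : ∀ (n : ℕ) (h : GS E K), Continuous h.1 →
      Integrable (fun p : E × K => cutoff n p.1 * h.1 p) π ∧
      ∫ p, cutoff n p.1 * h.1 p ∂π = L ⟨_, hmt n h⟩ := by
    intro n h hc
    have hcc : Continuous fun p : E × K => cutoff n p.1 * h.1 p :=
      ((cutoff_continuous n).comp continuous_fst).mul hc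
    let φ : C_c(E × K, ℝ) := ⟨⟨_, hcc⟩, htr n h hc⟩
    have : IsFiniteMeasureOnCompacts π := by
      change IsFiniteMeasureOnCompacts (RealRMK.rieszMeasure Λ)
      infer_instance
    exact ⟨hcc.integrable_of_hasCompactSupport (htr n h hc), hπ φ⟩
  have hwmem : (fun p : E × K => 1 + ‖p.1‖) ∈ GS E K := by
    refine ⟨1, fun p => ?_⟩
    rw [one_mul, abs_of_nonneg (by positivity)]
  have hwc : Continuous (fun p : E × K => 1 + ‖p.1‖) := by fun_prop
  have hwint : Integrable (fun p : E × K => 1 + ‖p.1‖) π := by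
    refine ⟨hwc.aestronglyMeasurable, ?_⟩
    rw [hasFiniteIntegral_iff_ofReal (Filter.Eventually.of_forall fun p => by positivity)]
    refine lt_of_le_of_lt ?_ (ENNReal.ofReal_lt_top (r := ∫ x, (1 + ‖x‖) ∂ν))
    have hlim : ∀ p : E × K, Filter.Tendsto
        (fun n => ENNReal.ofReal (cutoff n p.1 * (1 + ‖p.1‖))) Filter.atTop
        (nhds (ENNReal.ofReal (1 + ‖p.1‖))) := by
      intro p
      refine ENNReal.tendsto_ofReal ?_
      simpa using (cutoff_tendsto p.1).mul_const (1 + ‖p.1‖)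
    have e : ∫⁻ p : E × K, ENNReal.ofReal (1 + ‖p.1‖) ∂π
        = ∫⁻ p : E × K, Filter.liminf
          (fun n => ENNReal.ofReal (cutoff n p.1 * (1 + ‖p.1‖))) Filter.atTop ∂π :=
      lintegral_congr fun p => (hlim p).liminf_eq.symm
    rw [e]
    refine (lintegral_liminf_le fun n => ?_).trans ?_
    · exact (((cutoff_continuous n).comp continuous_fst).mul hwc).measurable.ennreal_ofReal
    · refine Filter.liminf_le_of_frequently_le' (Filter.Frequently.of_forall fun n => ?_)
      obtain ⟨i1, i2⟩ := hπt n ⟨_, hwmem⟩ hwc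
      simp only at i1 i2
      rw [← ofReal_integral_eq_lintegral_ofReal i1
        (Filter.Eventually.of_forall fun p => mul_nonneg (cutoff_nonneg _ _) (by positivity)), i2]
      refine ENNReal.ofReal_le_ofReal (hLle _ _ hw fun x y => ?_)
      exact mul_le_of_le_one_left (by positivity) (cutoff_le_one _ _)
  have hfin : IsFiniteMeasure π := by
    have : Integrable (fun _ : E × K => (1 : ℝ)) π :=
      hwint.mono' aestronglyMeasurable_const (Filter.Eventually.of_forall fun p => by simp)
    rcases integrable_const_iff.1 this with h | h
    · exact absurd h one_ne_zero
    · exact h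
  refine ⟨π, hfin, fun h hc => ?_⟩
  obtain ⟨A, hA⟩ := h.2
  have lim1 : Filter.Tendsto (fun n => ∫ p, cutoff n p.1 * h.1 p ∂π) Filter.atTop
      (nhds (∫ p, h.1 p ∂π)) := by
    refine tendsto_integral_of_dominated_convergence (fun p => A * (1 + ‖p.1‖)) (fun n => ?_)
      (hwint.const_mul A) (fun n => Filter.Eventually.of_forall fun p => ?_)
      (Filter.Eventually.of_forall fun p => ?_)
    · exact (hπt n h hc).1.1
    · rw [norm_mul, Real.norm_eq_abs, Real.norm_eq_abs, abs_of_nonneg (cutoff_nonneg _ _)]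
      exact (mul_le_of_le_one_left (abs_nonneg _) (cutoff_le_one _ _)).trans (hA p)
    · simpa using (cutoff_tendsto p.1).mul_const (h.1 p)
  have lim2 : Filter.Tendsto (fun n => ∫ p, cutoff n p.1 * h.1 p ∂π) Filter.atTop
      (nhds (L h)) := by
    have hz : Filter.Tendsto (fun n => ∫ x, (1 - cutoff n x) * (A * (1 + ‖x‖)) ∂ν) Filter.atTop
        (nhds (∫ x : E, (0 : ℝ) ∂ν)) := by
      refine tendsto_integral_of_dominated_convergence (fun x => |A * (1 + ‖x‖)|) (fun n => ?_)
        (hw.const_mul A).abs (fun n => Filter.Eventually.of_forall fun x => ?_)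
        (Filter.Eventually.of_forall fun x => ?_)
      · have := cutoff_continuous (E := E) n
        exact Continuous.aestronglyMeasurable (by fun_prop)
      · have a := cutoff_nonneg n x
        have b := cutoff_le_one n x
        rw [norm_mul, Real.norm_eq_abs, Real.norm_eq_abs, abs_of_nonneg (by linarith)]
        exact mul_le_of_le_one_left (abs_nonneg _) (by linarith)
      · have := ((tendsto_const_nhds (x := (1 : ℝ))).sub (cutoff_tendsto x)).mul_const
          (A * (1 + ‖x‖))
        simpa using this
    rw [integral_zero] at hz
    rw [tendsto_iff_dist_tendsto_zero]
    refine squeeze_zero (fun n => dist_nonneg) (fun n => ?_) hz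
    have hint : Integrable (fun x => (1 - cutoff n x) * (A * (1 + ‖x‖))) ν := by
      refine (hw.const_mul A).abs.mono' ?_ (Filter.Eventually.of_forall fun x => ?_)
      · have := cutoff_continuous (E := E) n
        exact Continuous.aestronglyMeasurable (by fun_prop)
      · have a := cutoff_nonneg n x
        have b := cutoff_le_one n x
        rw [norm_mul, Real.norm_eq_abs, Real.norm_eq_abs, abs_of_nonneg (by linarith)]
        exact mul_le_of_le_one_left (abs_nonneg _) (by linarith)
    rw [(hπt n h hc).2, Real.dist_eq, abs_le]
    have key : ∀ x y, |(1 - cutoff n x) * h.1 (x, y)| ≤ (1 - cutoff n x) * (A * (1 + ‖x‖)) := by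
      intro x y
      have b := cutoff_le_one n x
      rw [abs_mul, abs_of_nonneg (by linarith)]
      exact mul_le_mul_of_nonneg_left (hA (x, y)) (by linarith)
    constructor
    · have := hLle (h - ⟨_, hmt n h⟩) _ hint (fun x y => by
        have := (le_abs_self _).trans (key x y)
        simp only [Submodule.coe_sub, Pi.sub_apply]
        linarith)
      rw [map_sub] at this
      linarith
    · have := hLle (⟨_, hmt n h⟩ - h) _ hint (fun x y => by
        have := (neg_le_abs _).trans (key x y)
        simp only [Submodule.coe_sub, Pi.sub_apply]
        linarith)
      rw [map_sub] at this
      linarith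
  exact tendsto_nhds_unique lim1 lim2

theorem duality {E K : Type*} [NormedAddCommGroup E] [ProperSpace E]
    [MeasurableSpace E] [BorelSpace E] [SecondCountableTopology E]
    [MetricSpace K] [CompactSpace K] [MeasurableSpace K] [BorelSpace K]
    {ν : Measure E} {σ : Measure K} [IsProbabilityMeasure ν] [IsProbabilityMeasure σ]
    (hν : Integrable (fun x => ‖x‖) ν) (c : GS E K) (hc : Continuous c.1) :
    ∃ π : Measure (E × K), π.map Prod.fst = ν ∧ π.map Prod.snd = σ ∧
      ∫ p, c.1 p ∂π = sInf (DualSet ν σ c.1) := by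
  obtain ⟨L, hLc, hL⟩ := exists_functional (ν := ν) (σ := σ) hν c
  obtain ⟨π, hfin, hπ⟩ := exists_measure hν L hL
  refine ⟨π, ?_, ?_, by rw [hπ c hc, hLc]⟩
  · refine ext_of_forall_integral_eq_of_IsFiniteMeasure fun φ => ?_
    have hm : ∀ φ : BoundedContinuousFunction E ℝ, (fun p : E × K => φ p.1) ∈ GS E K := by
      intro φ
      refine ⟨‖φ‖, fun p => (φ.norm_coe_le_norm p.1).trans ?_⟩
      nlinarith [norm_nonneg p.1, norm_nonneg φ]
    have hle : ∀ φ : BoundedContinuousFunction E ℝ, L ⟨_, hm φ⟩ ≤ ∫ x, φ x ∂ν := by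
      intro φ
      have := (hL ⟨_, hm φ⟩).trans (dual_le hν _ (φ.integrable ν) (integrable_const (0 : ℝ))
        (by simp))
      simpa using this
    rw [integral_map measurable_fst.aemeasurable φ.continuous.aestronglyMeasurable]
    have e := hπ ⟨_, hm φ⟩ (φ.continuous.comp continuous_fst)
    simp only at e
    rw [e]
    refine le_antisymm (hle φ) ?_
    have h2 := hle (-φ)
    have h3 : L ⟨_, hm (-φ)⟩ = - L ⟨_, hm φ⟩ := by
      rw [← map_neg]
      rfl
    rw [h3] at h2
    simp only [BoundedContinuousFunction.coe_neg, Pi.neg_apply, integral_neg] at h2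
    linarith
  · refine ext_of_forall_integral_eq_of_IsFiniteMeasure fun φ => ?_
    have hm : ∀ φ : BoundedContinuousFunction K ℝ, (fun p : E × K => φ p.2) ∈ GS E K := by
      intro φ
      refine ⟨‖φ‖, fun p => (φ.norm_coe_le_norm p.2).trans ?_⟩
      nlinarith [norm_nonneg p.1, norm_nonneg φ]
    have hle : ∀ φ : BoundedContinuousFunction K ℝ, L ⟨_, hm φ⟩ ≤ ∫ x, φ x ∂σ := by
      intro φ
      have := (hL ⟨_, hm φ⟩).trans (dual_le hν _ (integrable_const (0 : ℝ)) (φ.integrable σ)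
        (by simp))
      simpa using this
    rw [integral_map measurable_snd.aemeasurable φ.continuous.aestronglyMeasurable]
    have e := hπ ⟨_, hm φ⟩ (φ.continuous.comp continuous_snd)
    simp only at e
    rw [e]
    refine le_antisymm (hle φ) ?_
    have h2 := hle (-φ)
    have h3 : L ⟨_, hm (-φ)⟩ = - L ⟨_, hm φ⟩ := by
      rw [← map_neg]
      rfl
    rw [h3] at h2
    simp only [BoundedContinuousFunction.coe_neg, Pi.neg_apply, integral_neg] at h2
    linarith

theorem part_two {d : ℕ} {k : ℝ} (hk : 0 < k)
    {μ ν : Measure (EuclideanSpace ℝ (Fin d))}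
    [IsProbabilityMeasure μ] [IsProbabilityMeasure ν]
    (hμ : Integrable (fun x => ‖x‖) μ) (hν : Integrable (fun y => ‖y‖) ν)
    {ρ : Measure (EuclideanSpace ℝ (Fin d))} [IsProbabilityMeasure ρ]
    (hρk : ρ (closedBall (0 : EuclideanSpace ℝ (Fin d)) k)ᶜ = 0)
    {ε : ℝ} (hε : 0 < ε) :
    ∃ f : EuclideanSpace ℝ (Fin d) → ℝ, ConvexOn ℝ Set.univ f ∧
      (∀ x x' : EuclideanSpace ℝ (Fin d), |f x - f x'| ≤ k * ‖x - x'‖) ∧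
      ∫ x, f x ∂ν - ∫ x, f x ∂μ ≤ OTcost ν ρ - OTcost μ ρ + ε := by
  have hρ := ball_ae hρk
  let K := closedBall (0 : EuclideanSpace ℝ (Fin d)) k
  have hKm : MeasurableSet K := isClosed_closedBall.measurableSet
  have : CompactSpace K := isCompact_iff_compactSpace.1 (isCompact_closedBall _ _)
  have : Nonempty K := ⟨⟨0, by simp [K, hk.le]⟩⟩
  have hKn : ∀ y : K, ‖(y : EuclideanSpace ℝ (Fin d))‖ ≤ k := fun y => by
    exact mem_closedBall_zero_iff.1 y.2
  have hemb : MeasurableEmbedding (Subtype.val : K → EuclideanSpace ℝ (Fin d)) :=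
    MeasurableEmbedding.subtype_coe hKm
  let σ : Measure K := ρ.comap Subtype.val
  have hσ : σ.map Subtype.val = ρ := by
    simp only [σ]
    rw [map_comap_subtype_coe hKm]
    exact Measure.restrict_eq_self_of_ae_mem hρk
  have hσp : IsProbabilityMeasure σ := by
    constructor
    have : (σ.map Subtype.val) Set.univ = 1 := by rw [hσ]; exact measure_univ
    rwa [Measure.map_apply measurable_subtype_coe MeasurableSet.univ, Set.preimage_univ] at this
  have hcb : ∀ (x : EuclideanSpace ℝ (Fin d)) (y : K), |(⟪x, (y : _)⟫ : ℝ)| ≤ k * ‖x‖ := by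
    intro x y
    refine (abs_real_inner_le_norm _ _).trans ?_
    rw [mul_comm]
    gcongr
    exact hKn y
  let c : GS (EuclideanSpace ℝ (Fin d)) K :=
    ⟨fun p => ⟪p.1, (p.2 : EuclideanSpace ℝ (Fin d))⟫, k, fun p => (hcb p.1 p.2).trans (by
      gcongr
      linarith)⟩
  have hc : Continuous c.1 := by
    change Continuous fun p : EuclideanSpace ℝ (Fin d) × K =>
      ⟪p.1, (p.2 : EuclideanSpace ℝ (Fin d))⟫
    fun_prop
  obtain ⟨π, h1, h2, h3⟩ := duality (ν := ν) (σ := σ) hν c hc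
  -- the coupling
  let J : EuclideanSpace ℝ (Fin d) × K → EuclideanSpace ℝ (Fin d) × EuclideanSpace ℝ (Fin d) :=
    fun p => (p.1, (p.2 : EuclideanSpace ℝ (Fin d)))
  have hJ : Measurable J := by fun_prop
  have hcoup : π.map J ∈ Couplings ν ρ := by
    constructor
    · rw [Measure.map_map measurable_fst hJ]
      exact h1
    · rw [Measure.map_map measurable_snd hJ, ← hσ, ← h2,
        Measure.map_map measurable_subtype_coe measurable_snd]
      rfl
  have lo := le_OTcost_s13 hν hρ hcoup
  rw [integral_map hJ.aemeasurable (coupling_facts hν hρ hcoup).1.1] at lo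
  have lo' : sInf (DualSet ν σ c.1) ≤ OTcost ν ρ := h3 ▸ lo
  obtain ⟨r, ⟨f, g, hf, hg, hfg, rfl⟩, hr⟩ :=
    exists_lt_of_csInf_lt (DualSet_nonempty hν c) (lt_add_of_pos_right (sInf (DualSet ν σ c.1)) hε)
  have hfg' : ∀ (x : EuclideanSpace ℝ (Fin d)) (y : K), ⟪x, (y : _)⟫ ≤ f x + g y := hfg
  let F : EuclideanSpace ℝ (Fin d) → ℝ := fun x => ⨆ y : K, (⟪x, (y : _)⟫ - g y)
  have hbd : ∀ x, BddAbove (Set.range fun y : K => ⟪x, (y : EuclideanSpace ℝ (Fin d))⟫ - g y) := by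
    intro x
    refine ⟨f x, ?_⟩
    rintro _ ⟨y, rfl⟩
    have := hfg' x y
    simp only
    linarith
  have hF : ∀ (x : EuclideanSpace ℝ (Fin d)) (y : K), ⟪x, (y : _)⟫ - g y ≤ F x := fun x y => le_ciSup (hbd x) y
  have hFf : ∀ x, F x ≤ f x := fun x => ciSup_le fun y => by
    have := hfg' x y
    linarith
  have hFcv : ConvexOn ℝ Set.univ F := by
    refine ⟨convex_univ, ?_⟩
    intro x _ x' _ a b ha hb hab
    refine ciSup_le fun y => ?_
    rw [inner_add_left, real_inner_smul_left, real_inner_smul_left, smul_eq_mul, smul_eq_mul]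
    have i1 := mul_le_mul_of_nonneg_left (hF x y) ha
    have i2 := mul_le_mul_of_nonneg_left (hF x' y) hb
    have i3 : g y = a * g y + b * g y := by rw [← add_mul, hab, one_mul]
    rw [mul_sub] at i1 i2
    linarith
  have hFl' : ∀ x x', F x - F x' ≤ k * ‖x - x'‖ := by
    intro x x'
    rw [sub_le_iff_le_add]
    refine ciSup_le fun y => ?_
    have i1 := hF x' y
    have i2 := (le_abs_self _).trans (hcb (x - x') y)
    rw [inner_sub_left] at i2
    linarith
  have hFl : ∀ x x', |F x - F x'| ≤ k * ‖x - x'‖ := by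
    intro x x'
    rw [abs_sub_le_iff]
    refine ⟨hFl' x x', ?_⟩
    rw [norm_sub_rev]
    exact hFl' x' x
  refine ⟨F, hFcv, hFl, ?_⟩
  have hFμ := (lip_integrable hμ hk hFl).2
  have hFν := (lip_integrable hν hk hFl).2
  classical
  let G : EuclideanSpace ℝ (Fin d) → ℝ := fun y => if h : y ∈ K then g ⟨y, h⟩ else 0
  have hGv : ∀ y : K, G y = g y := fun y => by simp [G]
  have hG : Integrable G ρ := by
    rw [← hσ, hemb.integrable_map_iff]
    exact hg.congr (Filter.Eventually.of_forall fun y => (hGv y).symm)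
  have eG : ∫ y, G y ∂ρ = ∫ y, g y ∂σ := by
    rw [← hσ, hemb.integral_map]
    exact integral_congr_ae (Filter.Eventually.of_forall hGv)
  have up : OTcost μ ρ ≤ ∫ x, F x ∂μ + ∫ y, G y ∂ρ := by
    refine OTcost_le_s13 hμ hρ hFμ hG ?_
    filter_upwards [hρ] with y hy x
    have hy' : y ∈ K := by simpa [K] using hy
    have i1 := hF x ⟨y, hy'⟩
    have i2 := hGv ⟨y, hy'⟩
    simp only at i1 i2
    linarith
  have hmono : ∫ x, F x ∂ν ≤ ∫ x, f x ∂ν := integral_mono hFν hf hFf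
  linarith

theorem stmt13 (d : ℕ) (hd : 1 ≤ d) (k : ℝ) (hk : 0 < k)
    (μ ν : Measure (EuclideanSpace ℝ (Fin d)))
    [IsProbabilityMeasure μ] [IsProbabilityMeasure ν]
    (hμ : Integrable (fun x => ‖x‖) μ) (hν : Integrable (fun y => ‖y‖) ν) :
    sInf {r : ℝ | ∃ f : EuclideanSpace ℝ (Fin d) → ℝ,
        ConvexOn ℝ Set.univ f ∧
        (∀ x x' : EuclideanSpace ℝ (Fin d), |f x - f x'| ≤ k * ‖x - x'‖) ∧
        r = ∫ x, f x ∂ν - ∫ x, f x ∂μ}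
      = sInf {r : ℝ | ∃ ρ : Measure (EuclideanSpace ℝ (Fin d)),
        IsProbabilityMeasure ρ ∧ ρ (closedBall (0 : EuclideanSpace ℝ (Fin d)) k)ᶜ = 0 ∧
        r = OTcost ν ρ - OTcost μ ρ} := by
  have hbA : BddBelow {r : ℝ | ∃ f : EuclideanSpace ℝ (Fin d) → ℝ,
        ConvexOn ℝ Set.univ f ∧
        (∀ x x' : EuclideanSpace ℝ (Fin d), |f x - f x'| ≤ k * ‖x - x'‖) ∧
        r = ∫ x, f x ∂ν - ∫ x, f x ∂μ} := by
    refine ⟨-(k * ∫ x, ‖x‖ ∂ν) - k * ∫ x, ‖x‖ ∂μ, ?_⟩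
    rintro r ⟨f, -, hf, rfl⟩
    have i1 : ∫ x, (f 0 - k * ‖x‖) ∂ν ≤ ∫ x, f x ∂ν := by
      refine integral_mono ((integrable_const _).sub (hν.const_mul k))
        (lip_integrable hν hk hf).2 fun x => ?_
      have := (abs_le.1 (hf x 0)).1
      rw [sub_zero] at this
      simp only
      linarith
    have i2 : ∫ x, f x ∂μ ≤ ∫ x, (f 0 + k * ‖x‖) ∂μ := by
      refine integral_mono (lip_integrable hμ hk hf).2
        ((integrable_const _).add (hμ.const_mul k)) fun x => ?_
      have := (abs_le.1 (hf x 0)).2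
      rw [sub_zero] at this
      simp only
      linarith
    rw [integral_sub (integrable_const _) (hν.const_mul k), integral_const,
      integral_const_mul] at i1
    rw [integral_add (integrable_const _) (hμ.const_mul k), integral_const,
      integral_const_mul] at i2
    simp only [probReal_univ, one_smul] at i1 i2
    linarith
  have hAB : ∀ r ∈ {r : ℝ | ∃ ρ : Measure (EuclideanSpace ℝ (Fin d)),
        IsProbabilityMeasure ρ ∧ ρ (closedBall (0 : EuclideanSpace ℝ (Fin d)) k)ᶜ = 0 ∧
        r = OTcost ν ρ - OTcost μ ρ}, sInf {r : ℝ | ∃ f : EuclideanSpace ℝ (Fin d) → ℝ,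
        ConvexOn ℝ Set.univ f ∧
        (∀ x x' : EuclideanSpace ℝ (Fin d), |f x - f x'| ≤ k * ‖x - x'‖) ∧
        r = ∫ x, f x ∂ν - ∫ x, f x ∂μ} ≤ r := by
    rintro r ⟨ρ, hp, hρ, rfl⟩
    refine le_of_forall_pos_le_add fun ε hε => ?_
    obtain ⟨f, h1, h2, h3⟩ := part_two hk hμ hν hρ hε
    exact (csInf_le hbA ⟨f, h1, h2, rfl⟩).trans h3
  refine le_antisymm (le_csInf ?_ hAB) (le_csInf ?_ ?_)
  · exact ⟨_, Measure.dirac 0, inferInstance, by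
      rw [Measure.dirac_apply' _ isClosed_closedBall.measurableSet.compl]
      simp [hk.le], rfl⟩
  · exact ⟨_, fun _ => 0, convexOn_const _ convex_univ, fun x x' => by
      rw [sub_zero, abs_zero]; positivity, rfl⟩
  · rintro r ⟨f, h1, h2, rfl⟩
    refine le_of_forall_pos_le_add fun ε hε => ?_
    have hk2 : 0 < 2 * k + 1 := by positivity
    obtain ⟨ρ, p1, p2, p3⟩ := part_one hk hμ hν h1 h2 (div_pos hε hk2)
    rw [mul_div_cancel₀ _ hk2.ne'] at p3
    exact (csInf_le ⟨_, hAB⟩ ⟨ρ, p1, p2, rfl⟩).trans p3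
end
end

section
/- Let d ≥ 1 and let μ, ν be Borel probability measures on ℝ^d with finite first moments. Suppose μ and ν are NOT in convex order, i.e. there exists a convex function h : ℝ^d → ℝ, integrable with respect to both μ and ν, with ∫ h dμ > ∫ h dν. Then there exist a convex function f : ℝ^d → ℝ integrable with respect to both μ and ν, and a function g : ℝ^d → ℝ^d such that g(x) is a subgradient of f at x for every x (i.e. f(x') − f(x) ≥ ⟨g(x), x'−x⟩ for all x, x' ∈ ℝ^d), and such that for all (x,y) ∈ ℝ^d × ℝ^d: −f(x) + ∫ f dμ + f(y) − ∫ f dν − ⟨g(x), y−x⟩ > 0. -/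
open MeasureTheory Metric RealInnerProductSpace

noncomputable section

theorem exists_subgradient {d : ℕ} {f : EuclideanSpace ℝ (Fin d) → ℝ}
    (hf : ConvexOn ℝ Set.univ f) (x : EuclideanSpace ℝ (Fin d)) :
    ∃ v : EuclideanSpace ℝ (Fin d), ∀ y, ⟪v, y - x⟫ ≤ f y - f x := by
  have hc : Continuous f := by
    rw [← continuousOn_univ]
    exact hf.continuousOn isOpen_univ
  have hconv := hf.convex_strict_epigraph
  have hopen : IsOpen {p : EuclideanSpace ℝ (Fin d) × ℝ | p.1 ∈ Set.univ ∧ f p.1 < p.2} := by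
    simp only [Set.mem_univ, true_and]
    exact isOpen_lt (hc.comp continuous_fst) continuous_snd
  obtain ⟨L, hL⟩ := geometric_hahn_banach_open_point (x := (x, f x)) hconv hopen (by simp)
  have hdec : ∀ (v : EuclideanSpace ℝ (Fin d)) (t : ℝ), L (v, t) = L (v, 0) + t * L (0, 1) := by
    intro v t
    have : (v, t) = (v, (0 : ℝ)) + t • ((0 : EuclideanSpace ℝ (Fin d)), (1 : ℝ)) := by simp
    rw [this, map_add, map_smul, smul_eq_mul]
  have hneg : L (0, 1) < 0 := by
    have h1 := hL (x, f x + 1) (by simp)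
    rw [hdec x (f x + 1), hdec x (f x)] at h1
    linarith
  let A : EuclideanSpace ℝ (Fin d) →L[ℝ] ℝ := L.comp (ContinuousLinearMap.inl ℝ _ ℝ)
  have hA : ∀ v, A v = L (v, 0) := fun v => rfl
  refine ⟨(-L (0, 1))⁻¹ • (InnerProductSpace.toDual ℝ _).symm A, fun y => ?_⟩
  rw [real_inner_smul_left, InnerProductSpace.toDual_symm_apply, map_sub, hA, hA,
    inv_mul_le_iff₀ (by linarith)]
  refine le_of_forall_pos_lt_add fun ε hε => ?_
  have hd : 0 < ε / (-L (0, 1)) := div_pos hε (by linarith)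
  have h2 := hL (y, f y + ε / (-L (0, 1))) (by simpa using hd)
  rw [hdec y, hdec x (f x)] at h2
  have h3 : ε / (-L (0, 1)) * L (0, 1) = -ε := by
    field_simp [hneg.ne]
  nlinarith

theorem stmt14 (d : ℕ) (hd : 1 ≤ d)
    (μ ν : Measure (EuclideanSpace ℝ (Fin d)))
    [IsProbabilityMeasure μ] [IsProbabilityMeasure ν]
    (hμ : Integrable (fun x => ‖x‖) μ) (hν : Integrable (fun y => ‖y‖) ν)
    (hno : ∃ h : EuclideanSpace ℝ (Fin d) → ℝ, ConvexOn ℝ Set.univ h ∧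
      Integrable h μ ∧ Integrable h ν ∧ ∫ y, h y ∂ν < ∫ x, h x ∂μ) :
    ∃ f : EuclideanSpace ℝ (Fin d) → ℝ, ∃ g : EuclideanSpace ℝ (Fin d) → EuclideanSpace ℝ (Fin d),
      ConvexOn ℝ Set.univ f ∧ Integrable f μ ∧ Integrable f ν ∧
      (∀ x x' : EuclideanSpace ℝ (Fin d), ⟪g x, x' - x⟫ ≤ f x' - f x) ∧
      (∀ x y : EuclideanSpace ℝ (Fin d),
        0 < -f x + ∫ z, f z ∂μ + f y - ∫ z, f z ∂ν - ⟪g x, y - x⟫) := by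
  obtain ⟨h, hc, h1, h2, hlt⟩ := hno
  choose g hg using exists_subgradient hc
  refine ⟨h, g, hc, h1, h2, hg, fun x y => ?_⟩
  have := hg x y
  linarith
end
end
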